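/- arXiv:math/0204179 — 4 statements merged into one kernel-verified Lean document; each statement's English description precedes it below -/
import Mathlib

section
/- Let f ∈ K[X] be a polynomial of degree d ≥ 2 with good reduction, and fix q ∈ 𝒪. Then for every ε > 0 there exists N such that every periodic point ξ ≠ q of f whose least period n satisfies n ≥ N has |ξ − q| > 1 − ε. (That is, |q − ξ| → 1 as the least period of ξ tends to infinity, provided ξ ≠ q.) -/
open Polynomial

namespace Aux

/-- `G^i - X = (G - X) (i + τ e)` when `G ≡ X` modulo `τ`. -/
lemma iter_sub {R : Type*} [CommRing R] (G : R[X]) (τ : R) (h : C τ ∣ G - X) (i : ℕ) :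
    ∃ e : R[X], G.comp^[i] X - X = (G - X) * ((i : R[X]) + C τ * e) := by
  obtain ⟨H, hH⟩ := h
  induction i with
  | zero => exact ⟨0, by simp⟩
  | succ i ih =>
    obtain ⟨e, he⟩ := ih
    rw [Function.iterate_succ_apply']
    set P := G.comp^[i] X with hP
    have hd : P - X ∣ H.comp P - H := by
      have := sub_dvd_eval_sub P X (H.map C)
      rwa [eval_map, eval_map, ← comp, ← comp, comp_X] at this
    obtain ⟨w, hw⟩ := hd
    refine ⟨e + ((i : R[X]) + C τ * e) * w, ?_⟩
    have hG : G = X + C τ * H := by rw [← hH]; ring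
    have h1 : G.comp P = P + C τ * H.comp P := by
      rw [hG]; simp
    have h2 : H.comp P = H + (P - X) * w := by rw [← hw]; ring
    rw [h1, h2, he]
    have h3 : P = X + (G - X) * ((i : R[X]) + C τ * e) := by rw [← he]; ring
    push_cast
    linear_combination h3 - hH

lemma iter_lin {R : Type*} [CommRing R] (T : R[X]) (a π : R) (h : C π ∣ T - C a * X) (n : ℕ) :
    C π ∣ T.comp^[n] X - C (a ^ n) * X := by
  induction n with
  | zero => simp
  | succ n ih =>
    rw [Function.iterate_succ_apply']
    set P := T.comp^[n] X
    obtain ⟨W, hW⟩ := h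
    obtain ⟨V, hV⟩ := ih
    refine ⟨C a * V + W.comp P, ?_⟩
    have hT : T = C a * X + C π * W := by rw [← hW]; ring
    have h1 : T.comp P = C a * P + C π * W.comp P := by rw [hT]; simp
    rw [h1, pow_succ, C_mul]
    linear_combination C a * hV

lemma iter_eval {R : Type*} [CommRing R] (T : R[X]) (n : ℕ) (x : R) :
    (T.comp^[n] X).eval x = (fun y => T.eval y)^[n] x := by
  rw [iterate_comp_eval]; simp

lemma iter_iter {R : Type*} [CommRing R] (T : R[X]) (m n : ℕ) :
    (T.comp^[m] X).comp^[n] X = T.comp^[m * n] X := by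
  have key : ∀ (k : ℕ) (Q : R[X]), (T.comp^[k] X).comp Q = T.comp^[k] Q := by
    intro k Q
    induction k with
    | zero => simp
    | succ k ih => rw [Function.iterate_succ_apply', Function.iterate_succ_apply', comp_assoc, ih]
  induction n with
  | zero => simp
  | succ n ih =>
    rw [Function.iterate_succ_apply', ih, key, Nat.mul_succ, Nat.add_comm,
      Function.iterate_add_apply]

lemma pow_level {R : Type*} [CommRing R] (p : ℕ) (G : R[X]) (π : R) (hp : π ∣ (p : R))
    (h : C π ∣ G - X) (k : ℕ) : C (π ^ (k + 1)) ∣ G.comp^[p ^ k] X - X := by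
  induction k with
  | zero => simpa using h
  | succ k ih =>
    obtain ⟨e, he⟩ := iter_sub _ _ ih p
    rw [iter_iter, ← pow_succ] at he
    rw [he, pow_succ π (k + 1), C_mul]
    refine mul_dvd_mul ih (dvd_add ?_ (Dvd.dvd.mul_right ?_ _))
    · have := map_dvd (C : R →+* R[X]) hp
      simpa using this
    · exact map_dvd C (dvd_pow_self π (Nat.succ_ne_zero k))

lemma fix_of_iter {R : Type*} [CommRing R] [IsDomain R] (c : R)
    (hc : ∀ l : ℕ, l.Prime → ∀ e : R, (l : R) + c * e ≠ 0) (n : ℕ) (hn : n ≠ 0) :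
    ∀ G : R[X], C c ∣ G - X → ∀ x : R, (G.comp^[n] X).eval x = x → G.eval x = x := by
  induction n using Nat.recOnMul with
  | zero => exact absurd rfl hn
  | one => intro G _ x; simp
  | prime l hl =>
    intro G hG x hx
    obtain ⟨e, he⟩ := iter_sub G c hG l
    have := congrArg (eval x) he
    simp only [eval_sub, eval_mul, eval_add, eval_X, eval_C, eval_natCast, hx, sub_self] at this
    rcases mul_eq_zero.1 this.symm with h | h
    · exact sub_eq_zero.1 h
    · exact absurd h (hc l hl _)
  | mul a b ha hb =>
    intro G hG x hx
    rw [← iter_iter] at hx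
    obtain ⟨ha0, hb0⟩ := mul_ne_zero_iff.1 hn
    refine ha ha0 G hG x (hb hb0 _ ?_ x hx)
    obtain ⟨e, he⟩ := iter_sub G c hG a
    rw [he]
    exact hG.mul_right _

section
variable {K : Type*} [NormedField K] [IsUltrametricDist K]

/-- The ring of integers. -/
def O (K : Type*) [NormedField K] [IsUltrametricDist K] : Subring K where
  carrier := {x | ‖x‖ ≤ 1}
  mul_mem' {a b} ha hb := by
    simp only [Set.mem_ofPred_eq, norm_mul] at *
    exact mul_le_one₀ ha (norm_nonneg _) hb
  one_mem' := by simp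
  add_mem' {a b} ha hb := (IsUltrametricDist.norm_add_le_max a b).trans (max_le ha hb)
  zero_mem' := by simp
  neg_mem' {a} ha := by simpa using ha

lemma O_norm (x : O K) : ‖(x : K)‖ ≤ 1 := x.2

lemma O_dvd {x y : O K} (hx : x ≠ 0) (h : ‖(y : K)‖ ≤ ‖(x : K)‖) : x ∣ y := by
  have hx' : (x : K) ≠ 0 := by simpa using hx
  refine ⟨⟨(y : K) / x, ?_⟩, ?_⟩
  · change ‖(y : K) / x‖ ≤ 1
    rw [norm_div]
    exact div_le_one_of_le₀ h (norm_nonneg _)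
  · ext
    push_cast
    field_simp

lemma prime_norm (p : ℕ) (hp : p.Prime) (hpK : ‖(p : K)‖ = (p : ℝ)⁻¹) (l : ℕ) (hl : l.Prime) :
    (p : ℝ)⁻¹ ≤ ‖(l : K)‖ := by
  have hp1 : (1 : ℝ) < p := by exact_mod_cast hp.one_lt
  by_cases hlp : l = p
  · rw [hlp, hpK]
  have hco : IsCoprime (l : ℤ) (p : ℤ) :=
    Nat.isCoprime_iff_coprime.2 ((Nat.coprime_primes hl hp).2 hlp)
  obtain ⟨u, v, huv⟩ := hco
  by_contra hlt
  push Not at hlt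
  have e : (u : K) * (l : K) + (v : K) * (p : K) = 1 := by exact_mod_cast congrArg (Int.cast : ℤ → K) huv
  have h1 := IsUltrametricDist.norm_add_le_max ((u : K) * (l : K)) ((v : K) * (p : K))
  have hu : ‖(u : K)‖ ≤ 1 := IsUltrametricDist.norm_intCast_le_one K u
  have hv : ‖(v : K)‖ ≤ 1 := IsUltrametricDist.norm_intCast_le_one K v
  rw [e, norm_one, norm_mul, norm_mul, hpK] at h1
  have hpi : (p : ℝ)⁻¹ < 1 := inv_lt_one_of_one_lt₀ hp1
  have h2 : ‖(u : K)‖ * ‖(l : K)‖ < 1 :=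
    (mul_le_of_le_one_left (norm_nonneg _) hu).trans_lt (hlt.trans hpi)
  have h3 : ‖(v : K)‖ * (p : ℝ)⁻¹ < 1 :=
    (mul_le_of_le_one_left (by positivity) hv).trans_lt hpi
  exact absurd h1 (not_le.2 (max_lt h2 h3))

lemma bounded (p : ℕ) (hp : p.Prime) (hpK : ‖(p : K)‖ = (p : ℝ)⁻¹) (T : (O K)[X])
    (a ρ : O K) (hρ0 : ρ ≠ 0) (hρ1 : ‖(ρ : K)‖ < 1) (hρp : (p : ℝ)⁻¹ ≤ ‖(ρ : K)‖)
    (hT : C ρ ∣ T - C a * X) (hT0 : T.eval 0 = 0) :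
    ∃ M : ℕ, 0 < M ∧ ∀ n : ℕ, n ≠ 0 → ∀ x : O K, (T.comp^[n] X).eval x = x →
      (T.comp^[M] X).eval x = x := by
  have hp0 : (0 : ℝ) < (p : ℝ)⁻¹ := by have := hp.pos; positivity
  by_cases hA : ∃ m : ℕ, m ≠ 0 ∧ ‖((a ^ m - 1 : O K) : K)‖ < 1
  · obtain ⟨m, hm, hlt⟩ := hA
    obtain ⟨π, hπ0, hπ1, hπρ, hπa⟩ : ∃ π : O K, π ≠ 0 ∧ ‖(π : K)‖ < 1 ∧
        ‖(ρ : K)‖ ≤ ‖(π : K)‖ ∧ ‖((a ^ m - 1 : O K) : K)‖ ≤ ‖(π : K)‖ := by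
      rcases le_total ‖((a ^ m - 1 : O K) : K)‖ ‖(ρ : K)‖ with h | h
      · exact ⟨ρ, hρ0, hρ1, le_rfl, h⟩
      · refine ⟨_, ?_, hlt, h, le_rfl⟩
        intro h0
        rw [h0] at h
        have : (0 : ℝ) < ‖(ρ : K)‖ := hp0.trans_le hρp
        simp at h
        exact hρ0 h
    have hπp : π ∣ (p : O K) := O_dvd hπ0 (by push_cast; rw [hpK]; exact hρp.trans hπρ)
    have hG : C π ∣ T.comp^[m] X - X := by
      have h1 := (map_dvd (C : O K →+* (O K)[X]) (O_dvd hπ0 hπρ)).trans (iter_lin T a ρ hT m)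
      have h2 := (map_dvd (C : O K →+* (O K)[X]) (O_dvd hπ0 hπa)).mul_right X
      have := dvd_add h1 h2
      convert this using 1
      rw [C_sub, C_1]; ring
    obtain ⟨k, hk⟩ := exists_pow_lt_of_lt_one hp0 hπ1
    have hL := pow_level p _ π hπp hG k
    rw [iter_iter] at hL
    have hM : m * p ^ k ≠ 0 := mul_ne_zero hm (pow_ne_zero _ hp.ne_zero)
    refine ⟨m * p ^ k, Nat.pos_of_ne_zero hM, fun n hn x hx => ?_⟩
    refine fix_of_iter (π ^ (k + 1)) ?_ n hn _ hL x ?_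
    · intro l hl e h0
      have h1 : (l : K) = - ((π : K) ^ (k + 1) * (e : K)) := by
        have := congrArg (Subtype.val) h0
        push_cast at this
        exact eq_neg_of_add_eq_zero_left this
      have h2 := prime_norm p hp hpK l hl
      rw [h1, norm_neg, norm_mul, norm_pow, pow_succ] at h2
      have h3 : ‖(π : K)‖ ^ k * ‖(π : K)‖ * ‖(e : K)‖ ≤ ‖(π : K)‖ ^ k := by
        rw [mul_assoc]
        exact mul_le_of_le_one_right (by positivity)
          (mul_le_one₀ hπ1.le (norm_nonneg _) (O_norm e))
      linarith
    · rw [iter_iter, mul_comm, ← iter_iter, iter_eval]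
      exact Function.iterate_fixed hx _
  · push Not at hA
    refine ⟨1, one_pos, fun n hn x hx => ?_⟩
    suffices x = 0 by subst this; simpa using hT0
    obtain ⟨W, hW⟩ := iter_lin T a ρ hT n
    have h0 : (T.comp^[n] X).eval 0 = 0 := by
      rw [iter_eval]; exact Function.iterate_fixed hT0 _
    have e1 := congrArg (eval x) hW
    have e2 := congrArg (eval 0) hW
    obtain ⟨w, hw⟩ := sub_dvd_eval_sub x 0 W
    simp only [eval_sub, eval_mul, eval_X, eval_C, hx, h0] at e1 e2
    have e3 : x * (a ^ n - 1 + ρ * w) = 0 := by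
      linear_combination -e1 + e2 + (-ρ) * hw
    rcases mul_eq_zero.1 e3 with h | h
    · exact h
    · exfalso
      have h1 := hA n hn
      rw [eq_neg_of_add_eq_zero_left h] at h1
      push_cast at h1
      rw [norm_neg, norm_mul] at h1
      have := mul_le_of_le_one_right (norm_nonneg (ρ : K)) (O_norm w)
      linarith

end

end Aux

/-- for a polynomial of degree `d ≥ 2` with good reduction and `q` integral,
`‖ξ - q‖ → 1` as the least period of the periodic point `ξ ≠ q` tends to infinity. -/
theorem stmt1 {K : Type*} [NormedField K] [IsUltrametricDist K] [CompleteSpace K]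
    [IsAlgClosed K] [CharZero K]
    (p : ℕ) (hp : p.Prime) (hpK : ‖(p : K)‖ = (p : ℝ)⁻¹)
    (f : K[X]) (d : ℕ) (hd : 2 ≤ d) (hdeg : f.natDegree = d)
    (hcoeff : ∀ i, ‖f.coeff i‖ ≤ 1) (hlead : ‖f.leadingCoeff‖ = 1)
    (q : K) (hq : ‖q‖ ≤ 1) :
    ∀ ε > (0 : ℝ), ∃ N : ℕ, ∀ ξ : K, ξ ≠ q →
      ξ ∈ Function.periodicPts (fun x => f.eval x) →
      N ≤ Function.minimalPeriod (fun x => f.eval x) ξ →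
      1 - ε < ‖ξ - q‖ := by
  intro ε hε
  by_cases hex : ∃ ξ₀ : K, ξ₀ ∈ Function.periodicPts (fun x => f.eval x) ∧ ‖ξ₀ - q‖ ≤ 1 - ε
  swap
  · push Not at hex
    exact ⟨0, fun ξ _ h _ => hex ξ h⟩
  obtain ⟨ξ₀, ⟨m, hm, hper⟩, hξ₀⟩ := hex
  have hp0 : (0 : ℝ) < (p : ℝ)⁻¹ := by have := hp.pos; positivity
  have hp1 : (p : ℝ)⁻¹ < 1 := inv_lt_one_of_one_lt₀ (by exact_mod_cast hp.one_lt)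
  -- choose the radius
  obtain ⟨n, hn⟩ := exists_pow_lt_of_lt_one hp0 (by linarith : 1 - ε < 1)
  have hn0 : n ≠ 0 := by rintro rfl; simp at hn; linarith
  obtain ⟨ρ, hρ⟩ := IsAlgClosed.exists_pow_nat_eq (p : K) (Nat.pos_of_ne_zero hn0)
  have hρn : ‖ρ‖ ^ n = (p : ℝ)⁻¹ := by rw [← norm_pow, hρ, hpK]
  have hρ1 : ‖ρ‖ < 1 := by
    by_contra h
    have := one_le_pow₀ (n := n) (not_lt.1 h)
    linarith
  have hρp : (p : ℝ)⁻¹ ≤ ‖ρ‖ := by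
    rw [← hρn]; exact pow_le_of_le_one (norm_nonneg _) hρ1.le hn0
  have hρr : 1 - ε ≤ ‖ρ‖ := by
    by_contra h
    have := pow_le_pow_left₀ (norm_nonneg ρ) (not_le.1 h).le n
    linarith
  have hρ0 : ρ ≠ 0 := norm_pos_iff.1 (hp0.trans_le hρp)
  have hξ₀1 : ‖ξ₀‖ ≤ 1 := by
    have := IsUltrametricDist.norm_add_le_max (ξ₀ - q) q
    rw [sub_add_cancel] at this
    exact this.trans (max_le (by linarith) hq)
  -- integral versions
  obtain ⟨F, hF⟩ : ∃ F : (Aux.O K)[X], F.map (Aux.O K).subtype = f := by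
    refine ⟨f.toSubring (Aux.O K) ?_, ?_⟩
    · intro c hc
      obtain ⟨i, -, rfl⟩ := mem_coeffs_iff.1 hc
      exact hcoeff i
    · ext i; rw [coeff_map]; exact coeff_toSubring _ _ _
  have hFe : ∀ x : Aux.O K, ((F.eval x : Aux.O K) : K) = f.eval (x : K) := by
    intro x
    rw [← hF]
    exact (eval_map_apply (Aux.O K).subtype x).symm
  have hFi : ∀ (k : ℕ) (x : Aux.O K),
      (((fun y => F.eval y)^[k] x : Aux.O K) : K) = (fun y => f.eval y)^[k] (x : K) := by
    intro k x
    induction k with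
    | zero => rfl
    | succ k ih => rw [Function.iterate_succ_apply', Function.iterate_succ_apply', hFe, ih]
  let ρ' : Aux.O K := ⟨ρ, hρ1.le⟩
  let z : Aux.O K := ⟨ξ₀, hξ₀1⟩
  have hρ'0 : ρ' ≠ 0 := fun h => hρ0 (congrArg Subtype.val h)
  set g : (Aux.O K)[X] := F.comp^[m] X with hg
  have hgz : g.eval z = z := by
    rw [hg, Aux.iter_eval]
    apply Subtype.ext
    rw [hFi]
    exact hper
  obtain ⟨k, hk⟩ : X - C z ∣ g - C z := by
    rw [dvd_iff_isRoot]; simp [hgz]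
  set L : (Aux.O K)[X] := C z + C ρ' * X with hL
  set T : (Aux.O K)[X] := X * k.comp L with hT
  have hTg : ∀ x : Aux.O K, g.eval (z + ρ' * x) = z + ρ' * T.eval x := by
    intro x
    have : g = C z + (X - C z) * k := by rw [← hk]; ring
    rw [this, hT, hL]
    simp only [eval_add, eval_mul, eval_sub, eval_X, eval_C, eval_comp]
    ring
  have hTi : ∀ (j : ℕ) (x : Aux.O K),
      (fun y => g.eval y)^[j] (z + ρ' * x) = z + ρ' * (fun y => T.eval y)^[j] x := by
    intro j x
    induction j with
    | zero => rfl
    | succ j ih => rw [Function.iterate_succ_apply', Function.iterate_succ_apply', ih, hTg]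
  have hT1 : C ρ' ∣ T - C (k.eval z) * X := by
    have h1 : L - C z ∣ k.comp L - C (k.eval z) := by
      have := sub_dvd_eval_sub L (C z) (k.map C)
      rwa [eval_map, eval_map_apply, ← comp] at this
    have h2 : C ρ' ∣ L - C z := ⟨X, by rw [hL]; ring⟩
    have h3 := (h2.trans h1).mul_left X
    convert h3 using 1
    rw [hT]; ring
  obtain ⟨M, hM, hbd⟩ := Aux.bounded p hp hpK T (k.eval z) ρ' hρ'0 hρ1 hρp hT1 (by simp [hT])
  refine ⟨m * M + 1, fun ξ _ hξ hN => ?_⟩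
  by_contra hle
  push Not at hle
  obtain ⟨t, ht, hpt⟩ := hξ
  have hdist : ‖ξ - ξ₀‖ ≤ ‖ρ‖ := by
    have := IsUltrametricDist.norm_add_le_max (ξ - q) (-(ξ₀ - q))
    rw [norm_neg, ← sub_eq_add_neg, sub_sub_sub_cancel_right] at this
    exact this.trans (max_le (hle.trans hρr) (hξ₀.trans hρr))
  let x : Aux.O K := ⟨(ξ - ξ₀) / ρ, by
    change ‖(ξ - ξ₀) / ρ‖ ≤ 1
    rw [norm_div]
    exact div_le_one_of_le₀ hdist (norm_nonneg _)⟩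
  have hx : ((z + ρ' * x : Aux.O K) : K) = ξ := by
    change ξ₀ + ρ * ((ξ - ξ₀) / ρ) = ξ
    field_simp
    ring
  have hgF : ∀ j, (((fun y => g.eval y)^[j] (z + ρ' * x) : Aux.O K) : K)
      = (fun y => f.eval y)^[m * j] ξ := by
    intro j
    rw [← Aux.iter_eval, hg, Aux.iter_iter, Aux.iter_eval, hFi, hx]
  have hTt : (T.comp^[t] X).eval x = x := by
    rw [Aux.iter_eval]
    have h1 : (fun y => g.eval y)^[t] (z + ρ' * x) = z + ρ' * x := by
      apply Subtype.ext
      rw [hgF, hx]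
      exact hpt.const_mul m
    rw [hTi] at h1
    exact mul_left_cancel₀ hρ'0 (add_left_cancel h1)
  have hTM := hbd t ht.ne' x hTt
  rw [Aux.iter_eval] at hTM
  have h2 := hgF M
  rw [hTi, hTM, hx] at h2
  have h3 : Function.IsPeriodicPt (fun y => f.eval y) (m * M) ξ := h2.symm
  have := h3.minimalPeriod_le (Nat.mul_pos hm hM)
  omega
end

section
/- Let f ∈ K[X] be a polynomial of degree d ≥ 2 with good reduction such that f(0) = 0 and |f′(0) − 1| < 1/p, and let n > 1. Then the product over all nonzero periodic points ξ of f of |ξ| raised to the power aₙ*(ξ) equals 1/p if n is a power of p, and equals 1 otherwise. -/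
open Polynomial

/-- The `n`-th compositional iterate of a polynomial, with `f⁽⁰⁾ = X`. -/
noncomputable def polyIter {K : Type*} [CommSemiring K] (f : K[X]) : ℕ → K[X]
  | 0 => X
  | n + 1 => f.comp (polyIter f n)

/-- `aₙ(ξ)`: the multiplicity of `ξ` as a root of `f⁽ⁿ⁾(X) - X`. -/
noncomputable def aMult {K : Type*} [Field K] (f : K[X]) (n : ℕ) (ξ : K) : ℕ :=
  rootMultiplicity ξ (polyIter f n - X)

/-- `aₙ*(ξ) = Σ_{k ∣ n} μ(n/k)·a_k(ξ)`. -/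
noncomputable def aStar {K : Type*} [Field K] (f : K[X]) (n : ℕ) (ξ : K) : ℤ :=
  ∑ k ∈ n.divisors, (ArithmeticFunction.moebius (n / k)) * (aMult f k ξ : ℤ)


section helpers

variable {K : Type*} [NormedField K] [IsUltrametricDist K]

lemma aux_norm_eq {a b : K} (h : ‖a - b‖ < ‖b‖) : ‖a‖ = ‖b‖ := by
  have := IsUltrametricDist.norm_add_eq_max_of_norm_ne_norm (x := a - b) (y := b) h.ne
  rw [sub_add_cancel, max_eq_right h.le] at this
  exact this

lemma aux_norm_le_one {L : K} (h : ‖L - 1‖ ≤ 1) : ‖L‖ ≤ 1 := by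
  have := IsUltrametricDist.norm_add_le_max (L - 1) 1
  rw [sub_add_cancel, norm_one, max_eq_right h] at this
  exact this

lemma aux_pow_sub {L : K} (h : ‖L - 1‖ ≤ 1) (i : ℕ) : ‖L ^ i - 1‖ ≤ ‖L - 1‖ := by
  induction i with
  | zero => simp
  | succ i ih =>
    have e : L ^ (i + 1) - 1 = L * (L ^ i - 1) + (L - 1) := by ring
    rw [e]
    refine (IsUltrametricDist.norm_add_le_max _ _).trans (max_le ?_ le_rfl)
    rw [norm_mul]
    have h1 := aux_norm_le_one h
    nlinarith [norm_nonneg (L ^ i - 1), norm_nonneg L]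

lemma aux_sum_sub {L : K} (h : ‖L - 1‖ ≤ 1) (n : ℕ) :
    ‖∑ i ∈ Finset.range n, L ^ i - n‖ ≤ ‖L - 1‖ := by
  induction n with
  | zero => simp
  | succ n ih =>
    have e : ∑ i ∈ Finset.range (n + 1), L ^ i - ((n + 1 : ℕ) : K)
        = (∑ i ∈ Finset.range n, L ^ i - n) + (L ^ n - 1) := by
      rw [Finset.sum_range_succ]; push_cast; ring
    rw [e]
    exact (IsUltrametricDist.norm_add_le_max _ _).trans (max_le ih (aux_pow_sub h n))

lemma aux_sum_mul (L : K) (a b : ℕ) : ∑ i ∈ Finset.range (a * b), L ^ i =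
    (∑ i ∈ Finset.range a, L ^ i) * ∑ i ∈ Finset.range b, (L ^ a) ^ i := by
  induction b with
  | zero => simp
  | succ b ih =>
    rw [Nat.mul_succ, Finset.sum_range_add, ih, Finset.sum_range_succ _ b, mul_add, ← pow_mul,
      add_right_inj, Finset.sum_mul]
    simp only [pow_add, Finset.sum_mul, mul_comm]

lemma aux_norm_coprime {p : ℕ} (hp : p.Prime) (hpK : ‖(p : K)‖ = (p : ℝ)⁻¹) {m : ℕ}
    (hm : ¬ p ∣ m) : ‖(m : K)‖ = 1 := by
  have hc : IsCoprime (m : ℤ) (p : ℤ) :=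
    Nat.isCoprime_iff_coprime.2 (((Nat.Prime.coprime_iff_not_dvd hp).2 hm).symm)
  obtain ⟨u, v, huv⟩ := hc
  have h1 : (u : K) * m + v * p = 1 := by exact_mod_cast congrArg (Int.cast : ℤ → K) huv
  refine le_antisymm (IsUltrametricDist.norm_natCast_le_one K m) ?_
  by_contra! hlt
  have hu := IsUltrametricDist.norm_intCast_le_one K u
  have hv := IsUltrametricDist.norm_intCast_le_one K v
  have hp1 : (p : ℝ)⁻¹ < 1 := inv_lt_one_of_one_lt₀ (by exact_mod_cast hp.one_lt)
  have h2 := IsUltrametricDist.norm_add_le_max ((u : K) * m) (v * p)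
  rw [h1, norm_one, norm_mul, norm_mul, hpK] at h2
  have hp0 : (0 : ℝ) ≤ (p : ℝ)⁻¹ := by positivity
  rcases le_max_iff.1 h2 with h | h
  · nlinarith [norm_nonneg (m : K)]
  · nlinarith

lemma aux_sum_norm {p : ℕ} (hp : p.Prime) (hpK : ‖(p : K)‖ = (p : ℝ)⁻¹) (n : ℕ) :
    ∀ L : K, ‖L - 1‖ < (p : ℝ)⁻¹ → ‖∑ i ∈ Finset.range n, L ^ i‖ = ‖(n : K)‖ := by
  have hp1 : (p : ℝ)⁻¹ < 1 := inv_lt_one_of_one_lt₀ (by exact_mod_cast hp.one_lt)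
  induction n using induction_on_primes with
  | zero => simp
  | one => simp
  | prime_mul q a hq ih =>
    intro L hL
    have hL1 : ‖L - 1‖ ≤ 1 := (hL.trans hp1).le
    rw [aux_sum_mul, norm_mul, ih (L ^ q) ((aux_pow_sub hL1 q).trans_lt hL), Nat.cast_mul,
      norm_mul]
    congr 1
    apply aux_norm_eq
    refine (aux_sum_sub hL1 q).trans_lt (hL.trans_le ?_)
    by_cases h : p ∣ q
    · rw [(Nat.prime_dvd_prime_iff_eq hp hq).1 h] at hpK
      rw [(Nat.prime_dvd_prime_iff_eq hp hq).1 h, hpK]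
    · rw [aux_norm_coprime hp hpK h]; exact hp1.le

open Classical in
lemma aux_moebius {p : ℕ} (hp : p.Prime) (hpK : ‖(p : K)‖ = (p : ℝ)⁻¹) {c : ℝ} (hc : c ≠ 0)
    [CharZero K] {n : ℕ} (hn : 1 < n) :
    ∏ k ∈ n.divisors, (‖(k : K)‖ * c) ^ (ArithmeticFunction.moebius (n / k)) =
      if ∃ k : ℕ, n = p ^ k then (p : ℝ)⁻¹ else 1 := by
  set F : ℕ → ℝ := fun n => if n = 1 then c else if ∃ k : ℕ, n = p ^ k then (p : ℝ)⁻¹ else 1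
    with hF
  have hp0 : (p : ℝ)⁻¹ ≠ 0 := inv_ne_zero (by exact_mod_cast hp.ne_zero)
  have key : ∀ n : ℕ, 0 < n → ∏ i ∈ n.divisors, F i = ‖(n : K)‖ * c := by
    intro n hn
    obtain ⟨v, m, hm, rfl⟩ := Nat.exists_eq_pow_mul_and_not_dvd hn.ne' p hp.ne_one
    have hsub : (p ^ v).divisors ⊆ (p ^ v * m).divisors :=
      Nat.divisors_subset_of_dvd hn.ne' (Dvd.intro _ rfl)
    rw [← Finset.prod_subset hsub, Nat.prod_divisors_prime_pow hp, Finset.prod_range_succ']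
    · have : ∀ k ∈ Finset.range v, F (p ^ (k + 1)) = (p : ℝ)⁻¹ := by
        intro k _
        have h1 : p ^ (k + 1) ≠ 1 := (Nat.one_lt_pow (by simp) hp.one_lt).ne'
        simp only [hF]
        rw [if_neg h1, if_pos ⟨_, rfl⟩]
      rw [Finset.prod_congr rfl this]
      simp [hF, aux_norm_coprime hp hpK hm, hpK]
    · intro x hx hx'
      have h2 : ¬ ∃ k, x = p ^ k := by
        rintro ⟨k, rfl⟩
        apply hx'
        rw [Nat.mem_divisors]
        refine ⟨?_, pow_ne_zero _ hp.ne_zero⟩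
        have := (Nat.mem_divisors.1 hx).1
        refine Nat.Coprime.dvd_of_dvd_mul_right ?_ this
        exact Nat.Coprime.pow_left _ ((Nat.Prime.coprime_iff_not_dvd hp).2 hm)
      have h1 : x ≠ 1 := fun h => h2 ⟨0, by simpa using h⟩
      simp only [hF]
      rw [if_neg h1, if_neg h2]
  have := (ArithmeticFunction.prod_eq_iff_prod_pow_moebius_eq_of_nonzero (f := F)
    (g := fun n => ‖(n : K)‖ * c) (fun n _ => by simp only [hF]; split_ifs <;> simp_all)
    (fun n hn => mul_ne_zero (norm_ne_zero_iff.2 (by exact_mod_cast hn.ne')) hc)).1 key n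
      (by omega)
  rw [Nat.prod_divisorsAntidiagonal' (f := fun a b => (‖(b : K)‖ * c) ^
    (ArithmeticFunction.moebius a))] at this
  rw [this]
  simp only [hF]
  rw [if_neg hn.ne']

lemma aux_eval_iter (f : K[X]) (n : ℕ) (x : K) :
    (polyIter f n).eval x = (fun x => f.eval x)^[n] x := by
  induction n with
  | zero => simp [polyIter]
  | succ n ih => rw [Function.iterate_succ_apply', ← ih]; simp [polyIter]

lemma aux_deg (f : K[X]) (hd : 2 ≤ f.natDegree) (hlead : ‖f.leadingCoeff‖ = 1) (n : ℕ) :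
    (polyIter f n).natDegree = f.natDegree ^ n ∧ ‖(polyIter f n).leadingCoeff‖ = 1 := by
  induction n with
  | zero => simp [polyIter]
  | succ n ih =>
    refine ⟨by rw [polyIter, natDegree_comp, ih.1, pow_succ'], ?_⟩
    rw [polyIter, leadingCoeff_comp, norm_mul, norm_pow, ih.2, hlead, one_pow, one_mul]
    rw [ih.1]
    exact pow_ne_zero _ (by omega)

lemma aux_lead (f : K[X]) (hd : 2 ≤ f.natDegree) (hlead : ‖f.leadingCoeff‖ = 1) {n : ℕ}
    (hn : n ≠ 0) : ‖(polyIter f n - X).leadingCoeff‖ = 1 := by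
  obtain ⟨h1, h2⟩ := aux_deg f hd hlead n
  rw [leadingCoeff_sub_of_degree_lt, h2]
  apply degree_lt_degree
  rw [h1, natDegree_X]
  exact Nat.one_lt_pow hn (by omega)

/-- factorisation of iterates at the fixed point zero -/
lemma aux_factor (f h : K[X]) (m : ℕ) (hf : f - X = X ^ m * h) (h0 : f.eval 0 = 0) (n : ℕ) :
    ∃ H : K[X], polyIter f n - X = X ^ m * H ∧
      H.eval 0 = h.eval 0 * ∑ i ∈ Finset.range n, ((f.derivative.eval 0) ^ m) ^ i := by
  obtain ⟨w, hw⟩ := X_dvd_iff.2 (by rw [coeff_zero_eq_eval_zero, h0] : f.coeff 0 = 0)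
  have hder : f.derivative.eval 0 = w.eval 0 := by rw [hw]; simp
  have hu : ∀ i, ∃ u : K[X], polyIter f i = X * u ∧ u.eval 0 = (f.derivative.eval 0) ^ i := by
    intro i
    induction i with
    | zero => exact ⟨1, by simp [polyIter]⟩
    | succ i ih =>
      obtain ⟨u, hu, hu0⟩ := ih
      refine ⟨u * w.comp (X * u), ?_, ?_⟩
      · rw [polyIter, hu]
        conv_lhs => rw [hw]
        simp [mul_assoc]
      · simp [hu0, hder, pow_succ]
  induction n with
  | zero => exact ⟨0, by simp [polyIter]⟩
  | succ n ih =>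
    obtain ⟨H, hH, hH0⟩ := ih
    obtain ⟨u, hu, hu0⟩ := hu n
    refine ⟨H + u ^ m * h.comp (X * u), ?_, ?_⟩
    · have e : polyIter f (n + 1) - X = (f - X).comp (polyIter f n) + (polyIter f n - X) := by
        rw [sub_comp, X_comp, polyIter]; ring
      rw [e, hH, hf, hu]
      simp only [mul_comp, pow_comp, X_comp]
      ring
    · rw [Finset.sum_range_succ, mul_add, ← hH0]
      simp [hu0]
      ring

lemma aux_roots [IsAlgClosed K] [DecidableEq K] (g H : K[X]) (m : ℕ) (hg : g = X ^ m * H)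
    (hlead : ‖g.leadingCoeff‖ = 1) (hH : H.eval 0 ≠ 0) (S : Finset K)
    (hS0 : (0 : K) ∉ S) (hS : ∀ x, x ≠ 0 → g.eval x = 0 → x ∈ S) :
    ∏ ξ ∈ S, ‖ξ‖ ^ (rootMultiplicity ξ g) = ‖H.eval 0‖ := by
  have hH0 : H ≠ 0 := by rintro rfl; simp at hH
  have hg0 : g ≠ 0 := by rintro rfl; simp at hlead
  have hl : ‖H.leadingCoeff‖ = 1 := by
    rw [hg] at hlead; simpa using hlead
  have hmult : ∀ ξ ∈ S, ‖ξ‖ ^ (rootMultiplicity ξ g) = ‖ξ‖ ^ (H.roots.count ξ) := by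
    intro ξ hξ
    have : ξ ≠ 0 := fun h => hS0 (h ▸ hξ)
    rw [count_roots, hg, rootMultiplicity_mul (hg ▸ hg0), rootMultiplicity_eq_zero (p := X ^ m),
      zero_add]
    simp [this]
  rw [Finset.prod_congr rfl hmult]
  have hsplit := (IsAlgClosed.splits H).eq_prod_roots
  have hev : ‖H.eval 0‖ = (H.roots.map (fun a => ‖a‖)).prod := by
    conv_lhs => rw [hsplit]
    rw [eval_mul, eval_C, norm_mul, hl, one_mul, eval_multiset_prod, Multiset.map_map]
    rw [← Multiset.prod_hom_rel (s := H.roots) (r := fun (a : K) (b : ℝ) => ‖a‖ = b)]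
    · simp
    · intro a b c h
      simp [h]
  rw [hev, Finset.prod_multiset_map_count]
  symm
  apply Finset.prod_subset
  · intro x hx
    have hx' : H.eval x = 0 := by simpa [hH0] using hx
    exact hS x (fun h => hH (h ▸ hx')) (by rw [hg]; simp [hx'])
  · intro x _ hx
    rw [Multiset.mem_toFinset, ← Multiset.count_eq_zero] at hx
    rw [hx, pow_zero]

end helpers

/-- if `f` has good reduction, `f(0) = 0` and `‖f'(0) - 1‖ < 1/p`, then for
`n > 1` the product of `‖ξ‖ ^ aₙ*(ξ)` over all nonzero periodic points `ξ` equals `1/p` if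
`n` is a power of `p` and `1` otherwise. -/
theorem stmt4 {K : Type*} [NormedField K] [IsUltrametricDist K] [CompleteSpace K]
    [IsAlgClosed K] [CharZero K]
    (p : ℕ) (hp : p.Prime) (hpK : ‖(p : K)‖ = (p : ℝ)⁻¹)
    (f : K[X]) (d : ℕ) (hd : 2 ≤ d) (hdeg : f.natDegree = d)
    (hcoeff : ∀ i, ‖f.coeff i‖ ≤ 1) (hlead : ‖f.leadingCoeff‖ = 1)
    (h0 : f.eval 0 = 0) (hderiv : ‖f.derivative.eval 0 - 1‖ < (p : ℝ)⁻¹)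
    (n : ℕ) (hn : 1 < n) :
    ((∃ k : ℕ, n = p ^ k) →
      (∏ᶠ (ξ : K) (_ : ξ ≠ 0 ∧ ξ ∈ Function.periodicPts (fun x => f.eval x)),
        ‖ξ‖ ^ aStar f n ξ) = (p : ℝ)⁻¹) ∧
    ((¬ ∃ k : ℕ, n = p ^ k) →
      (∏ᶠ (ξ : K) (_ : ξ ≠ 0 ∧ ξ ∈ Function.periodicPts (fun x => f.eval x)),
        ‖ξ‖ ^ aStar f n ξ) = 1) := by
  classical
  subst hdeg
  have hp1 : (p : ℝ)⁻¹ < 1 := inv_lt_one_of_one_lt₀ (by exact_mod_cast hp.one_lt)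
  have hfX : ‖(f - X).leadingCoeff‖ = 1 := by
    have := aux_lead f hd hlead one_ne_zero
    simpa [polyIter] using this
  have hfX0 : f - X ≠ 0 := by intro h; simp [h] at hfX
  obtain ⟨h, hh, hnd⟩ := exists_eq_pow_rootMultiplicity_mul_and_not_dvd (f - X) hfX0 0
  set m := rootMultiplicity 0 (f - X) with hm
  rw [C_0, sub_zero] at hh hnd
  have hh0 : h.eval 0 ≠ 0 := by
    rwa [X_dvd_iff, coeff_zero_eq_eval_zero] at hnd
  set L := (f.derivative.eval 0) ^ m with hL
  have hL1 : ‖L - 1‖ < (p : ℝ)⁻¹ :=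
    (aux_pow_sub (hderiv.trans hp1).le m).trans_lt hderiv
  have hg0 : ∀ k, k ≠ 0 → polyIter f k - X ≠ 0 := by
    intro k hk h
    have := aux_lead f hd hlead hk
    simp [h] at this
  set S : Finset K := (n.divisors.biUnion fun k => (polyIter f k - X).roots.toFinset).erase 0
    with hS
  have hdiv : ∀ k ∈ n.divisors, k ≠ 0 := fun k hk => (Nat.pos_of_mem_divisors hk).ne'
  have hSmem : ∀ x, x ∈ S ↔ x ≠ 0 ∧ ∃ k ∈ n.divisors, (polyIter f k - X).eval x = 0 := by
    intro x
    simp only [hS, Finset.mem_erase, Finset.mem_biUnion, Multiset.mem_toFinset]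
    refine and_congr_right fun _ => exists_congr fun k => and_congr_right fun hk => ?_
    rw [mem_roots (hg0 k (hdiv k hk))]
    rfl
  have hprod : (∏ᶠ (ξ : K) (_ : ξ ≠ 0 ∧ ξ ∈ Function.periodicPts (fun x => f.eval x)),
        ‖ξ‖ ^ aStar f n ξ) = ∏ ξ ∈ S, ‖ξ‖ ^ aStar f n ξ := by
    apply finprod_cond_eq_prod_of_cond_iff
    intro x hx
    rw [hSmem]
    refine and_congr_right fun hx0 => ⟨fun _ => ?_, ?_⟩
    · by_contra! hcon
      apply hx
      have : aStar f n x = 0 := by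
        unfold aStar
        refine Finset.sum_eq_zero fun k hk => ?_
        have : aMult f k x = 0 := rootMultiplicity_eq_zero (hcon k hk)
        simp [this]
      rw [this, zpow_zero]
    · rintro ⟨k, hk, hev⟩
      refine ⟨k, Nat.pos_of_mem_divisors hk, ?_⟩
      rw [eval_sub, eval_X, sub_eq_zero, aux_eval_iter] at hev
      exact hev
  have hk : ∀ k ∈ n.divisors, ∏ ξ ∈ S, ‖ξ‖ ^ (aMult f k ξ) = ‖(k : K)‖ * ‖h.eval 0‖ := by
    intro k hk
    obtain ⟨H, hH, hH0⟩ := aux_factor f h m hh h0 k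
    have hn : ‖H.eval 0‖ = ‖(k : K)‖ * ‖h.eval 0‖ := by
      rw [hH0, norm_mul, aux_sum_norm hp hpK k L hL1, mul_comm]
    rw [← hn]
    refine aux_roots _ H m hH (aux_lead f hd hlead (hdiv k hk)) ?_ S (by simp [hS]) ?_
    · rw [← norm_ne_zero_iff, hn]
      exact mul_ne_zero (norm_ne_zero_iff.2 (by exact_mod_cast hdiv k hk))
        (norm_ne_zero_iff.2 hh0)
    · intro x hx hx'
      exact (hSmem x).2 ⟨hx, k, hk, hx'⟩
  have hzs : ∀ (a : ℝ), a ≠ 0 → ∀ (s : Finset ℕ) (e : ℕ → ℤ),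
      a ^ (∑ i ∈ s, e i) = ∏ i ∈ s, a ^ e i := by
    intro a ha s e
    induction s using Finset.induction_on with
    | empty => simp
    | insert i s hi ih => rw [Finset.sum_insert hi, Finset.prod_insert hi, zpow_add₀ ha, ih]
  have hfin : ∏ ξ ∈ S, ‖ξ‖ ^ aStar f n ξ =
      if ∃ k : ℕ, n = p ^ k then (p : ℝ)⁻¹ else 1 := by
    rw [← aux_moebius hp hpK (norm_ne_zero_iff.2 hh0) hn]
    have : ∀ ξ ∈ S, ‖ξ‖ ^ aStar f n ξ = ∏ k ∈ n.divisors,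
        (‖ξ‖ ^ (aMult f k ξ)) ^ (ArithmeticFunction.moebius (n / k)) := by
      intro ξ hξ
      unfold aStar
      rw [hzs _ (norm_ne_zero_iff.2 ((hSmem ξ).1 hξ).1)]
      refine Finset.prod_congr rfl fun k _ => ?_
      rw [mul_comm, zpow_mul, zpow_natCast]
    rw [Finset.prod_congr rfl this, Finset.prod_comm]
    refine Finset.prod_congr rfl fun k hkd => ?_
    rw [Finset.prod_zpow, hk k hkd]
  rw [hprod, hfin]
  exact ⟨fun h => if_pos h, fun h => if_neg h⟩
end

section
/- Let f ∈ K[X] be a polynomial of degree d ≥ 2 with good reduction and let q ∈ 𝒪. Then there exists a constant C = C(f,q) > 0 such that for all n ≥ 1, if f⁽ⁿ⁾(q) ≠ q then |f⁽ⁿ⁾(q) − q| > C·|n|_p, where |n|_p is the p-adic absolute value of the integer n. -/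
open Polynomial

namespace Stmt6

variable {K : Type*} [NormedField K] [IsUltrametricDist K]

/-- ultrametric bound for sums -/
lemma add_le_of {a b : K} {t : ℝ} (ha : ‖a‖ ≤ t) (hb : ‖b‖ ≤ t) : ‖a + b‖ ≤ t :=
  (IsUltrametricDist.norm_add_le_max a b).trans (max_le ha hb)

lemma sub_le_of {a b : K} {t : ℝ} (ha : ‖a‖ ≤ t) (hb : ‖b‖ ≤ t) : ‖a - b‖ ≤ t := by
  rw [sub_eq_add_neg]
  exact add_le_of ha (by rwa [norm_neg])

lemma mul_le_of {a b : K} {t : ℝ} (ha : ‖a‖ ≤ 1) (hb : ‖b‖ ≤ t) : ‖a * b‖ ≤ t := by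
  rw [norm_mul]
  have := norm_nonneg b
  nlinarith [norm_nonneg a]

lemma pow_le_of {a : K} (ha : ‖a‖ ≤ 1) (i : ℕ) : ‖a ^ i‖ ≤ 1 := by
  rw [norm_pow]; exact pow_le_one₀ (norm_nonneg _) ha

/-- `g` is approximately affine of slope `b` on the disc of centre `c` and radius `r`. -/
def Appr (g : K → K) (c : K) (r : ℝ) (b : K) : Prop :=
  ∀ x y, ‖x - c‖ ≤ r → ‖y - c‖ ≤ r → ‖g x - g y - b * (x - y)‖ ≤ r * ‖x - y‖

lemma Appr.lip {g : K → K} {c : K} {r : ℝ} {b : K} (h : Appr g c r b) (hr : r ≤ 1)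
    (hb : ‖b‖ ≤ 1) {x y : K} (hx : ‖x - c‖ ≤ r) (hy : ‖y - c‖ ≤ r) :
    ‖g x - g y‖ ≤ ‖x - y‖ := by
  have h1 := h x y hx hy
  have h2 : g x - g y = (g x - g y - b * (x - y)) + b * (x - y) := by ring
  rw [h2]
  refine add_le_of (h1.trans ?_) (mul_le_of hb le_rfl)
  nlinarith [norm_nonneg (x - y)]

lemma norm_le_one_of {c x : K} {r : ℝ} (hc : ‖c‖ ≤ 1) (hr : r ≤ 1) (hx : ‖x - c‖ ≤ r) :
    ‖x‖ ≤ 1 := by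
  have : x = (x - c) + c := by ring
  rw [this]; exact add_le_of (hx.trans hr) hc

lemma appr_pow {c : K} {r : ℝ} (hc : ‖c‖ ≤ 1) (hr0 : 0 ≤ r) (hr : r ≤ 1) (i : ℕ) :
    ∃ b : K, ‖b‖ ≤ 1 ∧ Appr (fun x => x ^ i) c r b := by
  induction i with
  | zero =>
    refine ⟨0, by simp, fun x y _ _ => ?_⟩
    simp only [pow_zero, sub_self, zero_mul, norm_zero]
    positivity
  | succ i ih =>
    obtain ⟨b, hb, h⟩ := ih
    refine ⟨c * b + c ^ i, add_le_of (mul_le_of hc hb) (pow_le_of hc i), fun x y hx hy => ?_⟩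
    have e : x ^ (i + 1) - y ^ (i + 1) - (c * b + c ^ i) * (x - y)
        = x * (x ^ i - y ^ i - b * (x - y)) + b * ((x - c) * (x - y))
          + (y ^ i - c ^ i) * (x - y) := by ring
    show ‖x ^ (i + 1) - y ^ (i + 1) - (c * b + c ^ i) * (x - y)‖ ≤ _
    rw [e]
    have hcc : ‖c - c‖ ≤ r := by simpa using hr0
    refine add_le_of (add_le_of (mul_le_of (norm_le_one_of hc hr hx) (h x y hx hy))
      (mul_le_of hb ?_)) ?_
    · rw [norm_mul]; gcongr
    · rw [norm_mul]; gcongr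
      exact (h.lip hr hb hy hcc).trans hy

lemma appr_sum {c : K} {r : ℝ} (hc : ‖c‖ ≤ 1) (hr0 : 0 ≤ r) (hr : r ≤ 1) (a : ℕ → K)
    (ha : ∀ i, ‖a i‖ ≤ 1) (n : ℕ) :
    ∃ b : K, ‖b‖ ≤ 1 ∧ Appr (fun x => ∑ i ∈ Finset.range n, a i * x ^ i) c r b := by
  induction n with
  | zero =>
    refine ⟨0, by simp, fun x y _ _ => ?_⟩
    simp only [Finset.range_zero, Finset.sum_empty, sub_self, zero_mul, norm_zero]
    positivity
  | succ n ih =>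
    obtain ⟨b, hb, h⟩ := ih
    obtain ⟨b', hb', h'⟩ := appr_pow hc hr0 hr n
    refine ⟨b + a n * b', add_le_of hb (mul_le_of (ha n) hb'), fun x y hx hy => ?_⟩
    have h1 := h x y hx hy
    have h2 := h' x y hx hy
    simp only [Finset.sum_range_succ] at h1 h2 ⊢
    have e : ∀ s t : K, s + a n * x ^ n - (t + a n * y ^ n) - (b + a n * b') * (x - y)
      = (s - t - b * (x - y)) + a n * (x ^ n - y ^ n - b' * (x - y)) := by intros; ring
    rw [e]
    exact add_le_of h1 (mul_le_of (ha n) h2)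

lemma appr_poly {c : K} {r : ℝ} (hc : ‖c‖ ≤ 1) (hr0 : 0 ≤ r) (hr : r ≤ 1) (f : K[X])
    (hf : ∀ i, ‖f.coeff i‖ ≤ 1) :
    ∃ b : K, ‖b‖ ≤ 1 ∧ Appr (fun x => f.eval x) c r b := by
  simp only [eval_eq_sum_range]
  exact appr_sum hc hr0 hr _ hf _

lemma eval_le_one (f : K[X]) (hf : ∀ i, ‖f.coeff i‖ ≤ 1) {x : K} (hx : ‖x‖ ≤ 1) :
    ‖f.eval x‖ ≤ 1 := by
  rw [eval_eq_sum_range]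
  refine IsUltrametricDist.norm_sum_le_of_forall_le_of_nonneg zero_le_one fun i _ => ?_
  exact mul_le_of (hf i) (pow_le_of hx i)

lemma iter_le_one (f : K[X]) (hf : ∀ i, ‖f.coeff i‖ ≤ 1) {x : K} (hx : ‖x‖ ≤ 1) (m : ℕ) :
    ‖(fun x => f.eval x)^[m] x‖ ≤ 1 := by
  induction m with
  | zero => simpa
  | succ m ih => rw [Function.iterate_succ_apply']; exact eval_le_one f hf ih

lemma Appr.comp {g h : K → K} {c : K} {r : ℝ} {b b' : K} (hg : Appr g c r b) (hr : r ≤ 1)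
    (hr0 : 0 ≤ r) (hb : ‖b‖ ≤ 1) (hh : Appr h (g c) r b') (hb' : ‖b'‖ ≤ 1) :
    Appr (h ∘ g) c r (b' * b) := by
  intro x y hx hy
  have hcc : ‖c - c‖ ≤ r := by simpa using hr0
  have h1 := hg x y hx hy
  have h2 := hh (g x) (g y) ((hg.lip hr hb hx hcc).trans hx) ((hg.lip hr hb hy hcc).trans hy)
  have h3 := hg.lip hr hb hx hy
  have e : (h ∘ g) x - (h ∘ g) y - b' * b * (x - y) =
    (h (g x) - h (g y) - b' * (g x - g y)) + b' * (g x - g y - b * (x - y)) := by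
    simp only [Function.comp]; ring
  rw [e]
  refine add_le_of (h2.trans (by gcongr)) (mul_le_of hb' h1)

lemma appr_iter {c : K} {r : ℝ} (hc : ‖c‖ ≤ 1) (hr0 : 0 ≤ r) (hr : r ≤ 1) (f : K[X])
    (hf : ∀ i, ‖f.coeff i‖ ≤ 1) (m : ℕ) :
    ∃ b : K, ‖b‖ ≤ 1 ∧ Appr ((fun x => f.eval x)^[m]) c r b := by
  induction m with
  | zero =>
    refine ⟨1, by simp, fun x y _ _ => ?_⟩
    simp only [Function.iterate_zero, id, one_mul, sub_self, norm_zero]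
    positivity
  | succ m ih =>
    obtain ⟨b, hb, h⟩ := ih
    obtain ⟨b', hb', h'⟩ := appr_poly (iter_le_one f hf hc m) hr0 hr f hf
    refine ⟨b' * b, mul_le_of hb' hb, ?_⟩
    rw [Function.iterate_succ']
    exact h.comp hr hr0 hb h' hb'

/-- the centre may be moved inside the disc -/
lemma Appr.move {g : K → K} {c c' : K} {r : ℝ} {b : K} (h : Appr g c r b) (hc : ‖c' - c‖ ≤ r) :
    Appr g c' r b := by
  intro x y hx hy
  refine h x y ?_ ?_
  · rw [← sub_add_sub_cancel x c' c]; exact add_le_of hx hc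
  · rw [← sub_add_sub_cancel y c' c]; exact add_le_of hy hc

lemma Appr.iter_dist {g : K → K} {q : K} {r : ℝ} {b : K} (h : Appr g q r b) (hr0 : 0 ≤ r)
    (hr : r ≤ 1) (hb : ‖b‖ ≤ 1) (hq : ‖g q - q‖ ≤ r) (k : ℕ) :
    ‖g^[k] q - q‖ ≤ ‖g q - q‖ := by
  induction k with
  | zero => simp
  | succ k ih =>
    rw [Function.iterate_succ_apply', ← sub_add_sub_cancel _ (g q) q]
    exact add_le_of ((h.lip hr hb (ih.trans hq) (by simpa using hr0)).trans ih) le_rfl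

lemma Appr.iter {g : K → K} {q : K} {r : ℝ} {b : K} (h : Appr g q r b) (hr0 : 0 ≤ r)
    (hr : r ≤ 1) (hb : ‖b‖ ≤ 1) (hq : ‖g q - q‖ ≤ r) (k : ℕ) :
    Appr (g^[k]) q r (b ^ k) := by
  induction k with
  | zero =>
    intro x y _ _
    simp only [Function.iterate_zero, id, pow_zero, one_mul, sub_self, norm_zero]
    positivity
  | succ k ih =>
    rw [Function.iterate_succ', pow_succ']
    exact ih.comp hr hr0 (pow_le_of hb k) (h.move ((h.iter_dist hr0 hr hb hq k).trans hq)) hb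

lemma Appr.iter_formula {g : K → K} {q : K} {r : ℝ} {b : K} (h : Appr g q r b) (hr0 : 0 ≤ r)
    (hr : r ≤ 1) (hb : ‖b‖ ≤ 1) (hq : ‖g q - q‖ ≤ r) (k : ℕ) :
    ‖g^[k] q - q - (g q - q) * ∑ i ∈ Finset.range k, b ^ i‖ ≤ r * ‖g q - q‖ := by
  induction k with
  | zero => simp; positivity
  | succ k ih =>
    have hd := h.iter_dist hr0 hr hb hq k
    have h1 := h (g^[k] q) q (hd.trans hq) (by simpa using hr0)
    rw [Function.iterate_succ_apply', Finset.sum_range_succ']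
    simp only [pow_succ, ← Finset.sum_mul, pow_zero]
    have e : g (g^[k] q) - q - (g q - q) * ((∑ i ∈ Finset.range k, b ^ i) * b + 1)
      = (g (g^[k] q) - g q - b * (g^[k] q - q))
        + b * (g^[k] q - q - (g q - q) * ∑ i ∈ Finset.range k, b ^ i) := by ring
    rw [e]
    exact add_le_of (h1.trans (by gcongr)) (mul_le_of hb ih)

/-- lower bound from the formula -/
lemma lower {y a s : K} {r t : ℝ} (h : ‖y - a * s‖ ≤ r * ‖a‖) (hrt : r < t) (hs : t ≤ ‖s‖) :
    ‖a‖ * ‖s‖ ≤ ‖y‖ := by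
  by_cases ha : a = 0
  · simp [ha]
  have ha' : 0 < ‖a‖ := norm_pos_iff.mpr ha
  by_contra! hlt
  have e : a * s = y - (y - a * s) := by ring
  have h2 : ‖a * s‖ ≤ max ‖y‖ ‖y - a * s‖ := by
    conv_lhs => rw [e]
    exact sub_le_of (le_max_left _ _) (le_max_right _ _)
  rw [norm_mul] at h2
  rcases le_max_iff.mp h2 with h3 | h3
  · linarith
  · have := h3.trans h
    nlinarith

lemma natCast_le_one (n : ℕ) : ‖(n : K)‖ ≤ 1 := IsUltrametricDist.norm_natCast_le_one K n

lemma norm_natCast_coprime (p : ℕ) (hp : p.Prime) (hpK : ‖(p : K)‖ = (p : ℝ)⁻¹) (k : ℕ)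
    (hk : ¬ p ∣ k) : ‖(k : K)‖ = 1 := by
  refine le_antisymm (natCast_le_one k) ?_
  by_contra! hlt
  have hc : IsCoprime (p : ℤ) (k : ℤ) :=
    Nat.isCoprime_iff_coprime.mpr ((Nat.Prime.coprime_iff_not_dvd hp).mpr hk)
  obtain ⟨u, v, huv⟩ := hc
  have huv' : (u : K) * p + v * k = 1 := by exact_mod_cast congrArg (Int.cast (R := K)) huv
  have hp1 : ‖(p : K)‖ < 1 := by
    rw [hpK]; exact inv_lt_one_of_one_lt₀ (by exact_mod_cast hp.one_lt)
  have h1 : ‖(1 : K)‖ ≤ max ‖(p : K)‖ ‖(k : K)‖ := by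
    rw [← huv']
    exact add_le_of (mul_le_of (IsUltrametricDist.norm_intCast_le_one K u) (le_max_left _ _))
      (mul_le_of (IsUltrametricDist.norm_intCast_le_one K v) (le_max_right _ _))
  rw [norm_one] at h1
  exact absurd (max_lt hp1 hlt) (not_lt.mpr h1)

lemma pow_sub_one_le {b : K} (hb : ‖b‖ ≤ 1) (i : ℕ) : ‖b ^ i - 1‖ ≤ ‖b - 1‖ := by
  induction i with
  | zero => simp
  | succ i ih =>
    have e : b ^ (i + 1) - 1 = b * (b ^ i - 1) + (b - 1) := by ring
    rw [e]; exact add_le_of (mul_le_of hb ih) le_rfl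

lemma norm_geom {b : K} (hb : ‖b‖ ≤ 1) (k : ℕ) (h : ‖b - 1‖ < ‖(k : K)‖) :
    ‖(k : K)‖ ≤ ‖∑ i ∈ Finset.range k, b ^ i‖ := by
  have h1 : ‖∑ i ∈ Finset.range k, b ^ i - (k : K)‖ ≤ ‖b - 1‖ := by
    have : ∑ i ∈ Finset.range k, b ^ i - (k : K) = ∑ i ∈ Finset.range k, (b ^ i - 1) := by
      simp
    rw [this]
    exact IsUltrametricDist.norm_sum_le_of_forall_le_of_nonneg (norm_nonneg _)
      fun i _ => pow_sub_one_le hb i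
  by_contra! hlt
  have e : (k : K) = (∑ i ∈ Finset.range k, b ^ i) - (∑ i ∈ Finset.range k, b ^ i - (k : K)) := by
    ring
  have h2 : ‖(k : K)‖ ≤ max ‖∑ i ∈ Finset.range k, b ^ i‖ ‖b - 1‖ := by
    conv_lhs => rw [e]
    exact sub_le_of (le_max_left _ _) (h1.trans (le_max_right _ _))
  exact absurd (max_lt hlt h) (not_lt.mpr h2)

lemma main_lower (p : ℕ) (hp : p.Prime) (hpK : ‖(p : K)‖ = (p : ℝ)⁻¹) {q : K} {r : ℝ}
    (hr0 : 0 ≤ r) (hrp : r < (p : ℝ)⁻¹) (k : ℕ) : ∀ (g : K → K) (b : K), 1 ≤ k →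
    Appr g q r b → ‖b‖ ≤ 1 → ‖b - 1‖ < (p : ℝ)⁻¹ → ‖g q - q‖ ≤ r →
    (padicNorm p (k : ℚ) : ℝ) * ‖g q - q‖ ≤ ‖g^[k] q - q‖ := by
  haveI : Fact p.Prime := ⟨hp⟩
  have hp1 : (p : ℝ)⁻¹ ≤ 1 := inv_le_one_of_one_le₀ (by exact_mod_cast hp.one_lt.le)
  have hr : r ≤ 1 := hrp.le.trans hp1
  have key : ∀ (g : K → K) (b : K) (k : ℕ), Appr g q r b → ‖b‖ ≤ 1 → ‖b - 1‖ < (p : ℝ)⁻¹ →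
      ‖g q - q‖ ≤ r → (p : ℝ)⁻¹ ≤ ‖(k : K)‖ → ‖(k : K)‖ * ‖g q - q‖ ≤ ‖g^[k] q - q‖ := by
    intro g b k h hb hb1 hq hk
    have h1 := h.iter_formula hr0 hr hb hq k
    have h2 := norm_geom hb k (hb1.trans_le hk)
    have h3 := lower h1 hrp (hk.trans h2)
    refine le_trans ?_ h3
    rw [mul_comm]; gcongr
  induction k using Nat.strong_induction_on with
  | _ k ih =>
    intro g b hk h hb hb1 hq
    by_cases hdvd : p ∣ k
    · obtain ⟨j, rfl⟩ := hdvd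
      have hj : 1 ≤ j := by
        rcases Nat.eq_zero_or_pos j with rfl | hj
        · simp at hk
        · exact hj
      have hlt : j < p * j := by nlinarith [hp.two_le]
      have h2 := key g b p h hb hb1 hq hpK.ge
      have h3 := ih j hlt (g^[p]) (b ^ p) hj (h.iter hr0 hr hb hq p) (pow_le_of hb p)
        ((pow_sub_one_le hb p).trans_lt hb1) ((h.iter_dist hr0 hr hb hq p).trans hq)
      rw [← Function.iterate_mul] at h3
      refine le_trans ?_ h3
      rw [Nat.cast_mul, padicNorm.mul, padicNorm.padicNorm_p hp.one_lt]
      rw [hpK] at h2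
      push_cast
      have h0 : (0 : ℝ) ≤ (padicNorm p (j : ℚ) : ℝ) := by exact_mod_cast padicNorm.nonneg _
      calc (p : ℝ)⁻¹ * (padicNorm p (j : ℚ) : ℝ) * ‖g q - q‖
          = (padicNorm p (j : ℚ) : ℝ) * ((p : ℝ)⁻¹ * ‖g q - q‖) := by ring
        _ ≤ _ := by gcongr
    · have hk1 := norm_natCast_coprime p hp hpK k hdvd
      have h2 := key g b k h hb hb1 hq (by rw [hk1]; exact hp1)
      rw [hk1] at h2
      rw [(padicNorm.nat_eq_one_iff k).mpr hdvd]
      simpa using h2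

end Stmt6

open Stmt6 in
/-- Diophantine estimate: if `f` has good reduction and `q` is integral, then
there is `C > 0` with `‖f⁽ⁿ⁾(q) - q‖ > C·|n|_p` for all `n ≥ 1`, provided the left-hand
side is nonzero. -/
theorem stmt6 {K : Type*} [NormedField K] [IsUltrametricDist K] [CompleteSpace K]
    [IsAlgClosed K] [CharZero K]
    (p : ℕ) (hp : p.Prime) (hpK : ‖(p : K)‖ = (p : ℝ)⁻¹)
    (f : K[X]) (d : ℕ) (hd : 2 ≤ d) (hdeg : f.natDegree = d)
    (hcoeff : ∀ i, ‖f.coeff i‖ ≤ 1) (hlead : ‖f.leadingCoeff‖ = 1)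
    (q : K) (hq : ‖q‖ ≤ 1) :
    ∃ C : ℝ, 0 < C ∧ ∀ n : ℕ, 1 ≤ n → (fun x => f.eval x)^[n] q ≠ q →
      C * (padicNorm p (n : ℚ) : ℝ) < ‖(fun x => f.eval x)^[n] q - q‖ := by
  haveI : Fact p.Prime := ⟨hp⟩
  have hp0 : (0 : ℝ) < (p : ℝ)⁻¹ := inv_pos.mpr (by exact_mod_cast hp.pos)
  have hp1 : (p : ℝ)⁻¹ ≤ 1 := inv_le_one_of_one_le₀ (by exact_mod_cast hp.one_lt.le)
  have hn1 : ∀ n : ℕ, (padicNorm p (n : ℚ) : ℝ) ≤ 1 := fun n => by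
    exact_mod_cast padicNorm.of_nat n
  have hn0 : ∀ n : ℕ, 1 ≤ n → (0 : ℝ) < (padicNorm p (n : ℚ) : ℝ) := fun n hn => by
    have : (n : ℚ) ≠ 0 := by exact_mod_cast (by omega : n ≠ 0)
    exact_mod_cast lt_of_le_of_ne (padicNorm.nonneg _) (padicNorm.nonzero this).symm
  set F : K → K := fun x => f.eval x with hF
  -- it is enough to have a weak inequality
  suffices H : ∃ C : ℝ, 0 < C ∧ ∀ n : ℕ, 1 ≤ n → F^[n] q ≠ q →
      C * (padicNorm p (n : ℚ) : ℝ) ≤ ‖F^[n] q - q‖ by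
    obtain ⟨C, hC, h⟩ := H
    refine ⟨C / 2, by positivity, fun n hn hne => lt_of_lt_of_le ?_ (h n hn hne)⟩
    have := hn0 n hn
    nlinarith
  have suff2 : ∀ C : ℝ, 0 < C → (∀ n : ℕ, 1 ≤ n → F^[n] q ≠ q → C ≤ ‖F^[n] q - q‖) →
      ∃ C : ℝ, 0 < C ∧ ∀ n : ℕ, 1 ≤ n → F^[n] q ≠ q →
      C * (padicNorm p (n : ℚ) : ℝ) ≤ ‖F^[n] q - q‖ := by
    intro C hC h
    refine ⟨C, hC, fun n hn hne => le_trans ?_ (h n hn hne)⟩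
    have := hn1 n
    nlinarith
  by_cases hper : ∃ m, 1 ≤ m ∧ F^[m] q = q
  · obtain ⟨m, hm, hmq⟩ := hper
    have hfin : ∀ N : ℕ, ∃ C : ℝ, 0 < C ∧ ∀ n < N, F^[n] q ≠ q → C ≤ ‖F^[n] q - q‖ := by
      intro N
      induction N with
      | zero => exact ⟨1, one_pos, by simp⟩
      | succ N ih =>
        obtain ⟨C, hC, h⟩ := ih
        by_cases hN : F^[N] q = q
        · refine ⟨C, hC, fun n hn hne => ?_⟩
          rcases Nat.lt_succ_iff_lt_or_eq.mp hn with h1 | rfl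
          · exact h n h1 hne
          · exact absurd hN hne
        · refine ⟨min C ‖F^[N] q - q‖, lt_min hC (norm_pos_iff.mpr (sub_ne_zero.mpr hN)),
            fun n hn hne => ?_⟩
          rcases Nat.lt_succ_iff_lt_or_eq.mp hn with h1 | rfl
          · exact (min_le_left _ _).trans (h n h1 hne)
          · exact min_le_right _ _
    obtain ⟨C, hC, h⟩ := hfin m
    refine suff2 C hC fun n hn hne => ?_
    have hmod : F^[n % m] q = F^[n] q :=
      Function.IsPeriodicPt.iterate_mod_apply (f := F) (x := q) hmq n
    rw [← hmod] at hne ⊢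
    exact h _ (Nat.mod_lt _ hm) hne
  push Not at hper
  by_cases hsmall : ∃ m, 1 ≤ m ∧ ‖F^[m] q - q‖ < (p : ℝ)⁻¹
  swap
  · push Not at hsmall
    exact suff2 _ hp0 fun n hn _ => hsmall n hn
  obtain ⟨m, hm, hmr⟩ := hsmall
  -- passing from `n` to a multiple
  have hmul : ∀ n k : ℕ, ‖F^[n * k] q - q‖ ≤ ‖F^[n] q - q‖ := by
    intro n k
    obtain ⟨b, hb, h⟩ := appr_iter hq zero_le_one le_rfl f hcoeff n
    rw [Function.iterate_mul]
    exact h.iter_dist zero_le_one le_rfl hb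
      (sub_le_of (iter_le_one f hcoeff hq n) hq) k
  set r := ‖F^[m] q - q‖ with hr
  have hr0 : 0 ≤ r := norm_nonneg _
  have hr1 : r ≤ 1 := hmr.le.trans hp1
  obtain ⟨b, hb, h⟩ := appr_iter hq hr0 hr1 f hcoeff m
  have hpos : ∀ n, 1 ≤ n → 0 < ‖F^[n] q - q‖ := fun n hn =>
    norm_pos_iff.mpr (sub_ne_zero.mpr (hper n hn))
  by_cases hroot : ∃ k, 1 ≤ k ∧ ‖b ^ k - 1‖ < (p : ℝ)⁻¹
  · obtain ⟨k, hk, hbk⟩ := hroot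
    have hmk : 1 ≤ m * k := Nat.mul_pos hm hk
    refine ⟨‖F^[m * k] q - q‖, hpos _ hmk, fun n hn _ => ?_⟩
    have h1 := main_lower p hp hpK hr0 hmr n (F^[m * k]) (b ^ k) hn
      (by rw [Function.iterate_mul]; exact h.iter hr0 hr1 hb le_rfl k) (pow_le_of hb k) hbk
      (hmul m k)
    rw [← Function.iterate_mul] at h1
    rw [mul_comm]
    refine h1.trans ?_
    rw [mul_comm (m * k) n]
    exact hmul n (m * k)
  · push Not at hroot
    refine suff2 (r * (p : ℝ)⁻¹) (mul_pos (hpos m hm) hp0) fun n hn _ => ?_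
    have h1 := h.iter_formula hr0 hr1 hb le_rfl n
    have hs : (p : ℝ)⁻¹ ≤ ‖∑ i ∈ Finset.range n, b ^ i‖ := by
      refine (hroot n hn).trans ?_
      rw [← mul_geom_sum b n]
      exact mul_le_of (sub_le_of hb (by simp)) le_rfl
    have h2 := lower h1 hmr hs
    rw [← Function.iterate_mul] at h2
    refine le_trans ?_ (h2.trans (by rw [mul_comm]; exact hmul n m))
    gcongr
end

section
/- Let d ≥ 2 be an integer and q ∈ K. Then the limit as n → ∞ of (1/dⁿ)·Σ log|ξ − q|, where the sum ranges over all roots ξ ≠ q of T_d⁽ⁿ⁾(X) − X in K counted with multiplicity (T_d the degree-d Chebyshev polynomial of the first kind, viewed in K[X] via its integer coefficients, and T_d⁽ⁿ⁾ its n-th iterate), exists and equals log⁺|2q| − log|2|, where log⁺ x = max{0, log x}. -/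
open Polynomial Filter

section helpers
variable {K : Type*} [NormedField K]

theorem polyIter_T (d n : ℕ) :
    polyIter (Polynomial.Chebyshev.T K d) n = Polynomial.Chebyshev.T K ((d ^ n : ℕ) : ℤ) := by
  induction n with
  | zero => simp [polyIter]
  | succ n ih =>
    rw [polyIter, ih, ← Polynomial.Chebyshev.T_mul]
    congr 1
    push_cast
    ring

theorem two_T_eval (q z : K) (hz : z ≠ 0) (h : 2 * q = z + z⁻¹) (n : ℕ) :
    2 * (Polynomial.Chebyshev.T K (n : ℤ)).eval q = z ^ n + z⁻¹ ^ n ∧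
    2 * (Polynomial.Chebyshev.T K ((n + 1 : ℕ) : ℤ)).eval q = z ^ (n + 1) + z⁻¹ ^ (n + 1) := by
  induction n with
  | zero =>
    constructor
    · norm_num
    · simp [h]
  | succ n ih =>
    refine ⟨ih.2, ?_⟩
    have h1 : (((n + 1 + 1 : ℕ) : ℤ)) = (n : ℤ) + 2 := by push_cast; ring
    have h2 : (((n + 1 : ℕ) : ℤ)) = (n : ℤ) + 1 := by push_cast; ring
    rw [h1, Polynomial.Chebyshev.T_add_two, ← h2]
    simp only [eval_sub, eval_mul, eval_X, eval_ofNat]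
    have e : z * z⁻¹ = 1 := mul_inv_cancel₀ hz
    linear_combination (z + z⁻¹) * ih.2 - ih.1 +
      2 * (Polynomial.Chebyshev.T K ((n + 1 : ℕ) : ℤ)).eval q * h + (z⁻¹ ^ n + z ^ n) * e

theorem two_F_eval (q z : K) (hz : z ≠ 0) (h : 2 * q = z + z⁻¹) (n : ℕ) :
    2 * ((Polynomial.Chebyshev.T K ((n + 1 : ℕ) : ℤ)).eval q - q) =
      z⁻¹ ^ (n + 1) * (z ^ (n + 2) - 1) * (z ^ n - 1) := by
  rw [mul_sub, (two_T_eval q z hz h n).2, h, inv_pow]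
  field_simp
  ring

/-- Pell equation. -/
theorem pell_T (q : K) (n : ℤ) :
    ((Polynomial.Chebyshev.T K (n + 1)).eval q) ^ 2 -
      (q ^ 2 - 1) * ((Polynomial.Chebyshev.U K n).eval q) ^ 2 = 1 := by
  have h := congrArg (fun P : K[X] => P.eval (2 * q)) (Polynomial.Chebyshev.S_sq_add_S_sq K n)
  have hs : ∀ m : ℤ, (Polynomial.Chebyshev.S K m).eval (2 * q)
      = (Polynomial.Chebyshev.U K m).eval q := by
    intro m
    rw [← Polynomial.Chebyshev.S_comp_two_mul_X]
    simp
  simp only [eval_add, eval_sub, eval_mul, eval_pow, eval_X, eval_one, hs] at h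
  have h2 := congrArg (fun P : K[X] => P.eval q) (Polynomial.Chebyshev.T_eq_U_sub_X_mul_U K (n + 1))
  simp only [eval_sub, eval_mul, eval_X, add_sub_cancel_right] at h2
  rw [h2]
  linear_combination h

theorem deriv_int [CharZero K] (q : K) (n : ℕ) (hn : 1 ≤ n)
    (h : (Polynomial.Chebyshev.T K ((n + 1 : ℕ) : ℤ)).eval q = q) :
    ∃ a : ℤ, a ≠ 0 ∧ |a| ≤ (n + 2) ^ 2 ∧
      (derivative (Polynomial.Chebyshev.T K ((n + 1 : ℕ) : ℤ) - X)).eval q = (a : K) := by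
  have hp := pell_T q n
  have e : (((n + 1 : ℕ) : ℤ)) = (n : ℤ) + 1 := by push_cast; ring
  rw [e] at h ⊢
  rw [h] at hp
  have hU : ∃ u : ℤ, (u = 1 ∨ u = -1 ∨ u = n + 1 ∨ u = -(n + 1)) ∧
      (Polynomial.Chebyshev.U K n).eval q = (u : K) := by
    have h0 : (q - 1) * ((q + 1) * (((Polynomial.Chebyshev.U K n).eval q - 1) *
        ((Polynomial.Chebyshev.U K n).eval q + 1))) = 0 := by linear_combination -hp
    rcases mul_eq_zero.1 h0 with h1 | h1
    · rw [sub_eq_zero.1 h1]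
      exact ⟨n + 1, by simp, by simp⟩
    rcases mul_eq_zero.1 h1 with h1 | h1
    · rw [eq_neg_of_add_eq_zero_left h1, Polynomial.Chebyshev.U_eval_neg_one]
      refine ⟨(n : ℤ).negOnePow * (n + 1), ?_, by push_cast; ring⟩
      rcases Int.units_eq_one_or (n : ℤ).negOnePow with h2 | h2 <;> rw [h2] <;> simp
    rcases mul_eq_zero.1 h1 with h1 | h1
    · exact ⟨1, by simp, by simpa using sub_eq_zero.1 h1⟩
    · exact ⟨-1, by simp, by simpa using eq_neg_of_add_eq_zero_left h1⟩
  obtain ⟨u, hu, hU⟩ := hU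
  refine ⟨(n + 1) * u - 1, ?_, ?_, ?_⟩
  · rcases hu with rfl | rfl | rfl | rfl <;> intro h3 <;> nlinarith
  · rw [abs_le]
    rcases hu with rfl | rfl | rfl | rfl <;> constructor <;> nlinarith
  · rw [derivative_sub, Polynomial.Chebyshev.T_derivative_eq_U]
    simp [hU]

theorem sum_log (G : K[X]) [IsAlgClosed K] (q : K) (hG : G.eval q ≠ 0) :
    (G.roots.map (fun ξ => Real.log ‖ξ - q‖)).sum
      = Real.log ‖G.eval q‖ - Real.log ‖G.leadingCoeff‖ := by
  have hG0 : G ≠ 0 := by rintro rfl; simp at hG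
  have key : ∀ s : Multiset K, q ∉ s → Real.log ‖(s.map (fun ξ => q - ξ)).prod‖ =
      (s.map (fun ξ => Real.log ‖ξ - q‖)).sum ∧ (s.map (fun ξ => q - ξ)).prod ≠ 0 := by
    intro s
    induction s using Multiset.induction_on with
    | empty => simp
    | cons a s ih =>
      intro h
      rw [Multiset.mem_cons, not_or] at h
      obtain ⟨h1, h2⟩ := ih h.2
      have h3 : q - a ≠ 0 := sub_ne_zero.2 h.1
      simp only [Multiset.map_cons, Multiset.prod_cons, Multiset.sum_cons]
      refine ⟨?_, mul_ne_zero h3 h2⟩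
      rw [norm_mul, Real.log_mul (norm_ne_zero_iff.2 h3) (norm_ne_zero_iff.2 h2), h1,
        norm_sub_rev]
  have hq : q ∉ G.roots := fun h => hG (isRoot_of_mem_roots h)
  obtain ⟨h1, h2⟩ := key _ hq
  have hs := (IsAlgClosed.splits G).eval_eq_prod_roots q
  rw [hs, norm_mul, Real.log_mul (by simpa using hG0) (norm_ne_zero_iff.2 h2), h1]
  ring

theorem sum_log_filter [DecidableEq K] [IsAlgClosed K] (F : K[X]) (q : K) (A : K) (hA0 : A ≠ 0)
    (hA : A = F.eval q ∨ (F.eval q = 0 ∧ A = (derivative F).eval q)) :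
    ((F.roots.filter (fun ξ => ξ ≠ q)).map (fun ξ => Real.log ‖ξ - q‖)).sum
      = Real.log ‖A‖ - Real.log ‖F.leadingCoeff‖ := by
  rcases hA with rfl | ⟨h0, rfl⟩
  · rw [Multiset.filter_eq_self.2, sum_log F q hA0]
    rintro a ha rfl
    exact hA0 (isRoot_of_mem_roots ha)
  · obtain ⟨G, rfl⟩ := dvd_iff_isRoot.2 h0
    have hG : G.eval q ≠ 0 := by simpa using hA0
    have hne : (X - C q) * G ≠ 0 := by
      intro h
      rw [h] at hA0
      simp at hA0
    rw [roots_mul hne, roots_X_sub_C, Multiset.singleton_add,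
      Multiset.filter_cons_of_neg _ (by simp), Multiset.filter_eq_self.2, sum_log G q hG]
    · simp
    · rintro a ha rfl
      exact hG (isRoot_of_mem_roots ha)

variable [IsUltrametricDist K]

theorem norm_coprime {p : ℕ} (hp : p.Prime) (hpK : ‖(p : K)‖ = (p : ℝ)⁻¹) (j : ℕ) (hj : ¬ p ∣ j) :
    ‖(j : K)‖ = 1 := by
  have hc : Nat.Coprime p j := (Nat.Prime.coprime_iff_not_dvd hp).2 hj
  obtain ⟨a, b, hab⟩ := (Nat.isCoprime_iff_coprime.2 hc)
  have hab' : (a : K) * p + b * j = 1 := by exact_mod_cast congrArg (Int.cast : ℤ → K) hab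
  apply le_antisymm (IsUltrametricDist.norm_natCast_le_one K j)
  by_contra! hlt
  have h1 : ‖(a : K) * p‖ < 1 := by
    rw [norm_mul, hpK]
    have := IsUltrametricDist.norm_intCast_le_one K a
    have h2 : (p : ℝ)⁻¹ < 1 := inv_lt_one_of_one_lt₀ (by exact_mod_cast hp.one_lt)
    have h3 : 0 ≤ (p : ℝ)⁻¹ := by positivity
    nlinarith
  have h2 : ‖(b : K) * j‖ < 1 := by
    rw [norm_mul]
    have := IsUltrametricDist.norm_intCast_le_one K b
    nlinarith [norm_nonneg (j : K)]
  have := IsUltrametricDist.norm_add_le_max ((a : K) * p) (b * j)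
  rw [hab', norm_one] at this
  exact absurd (lt_of_le_of_lt this (max_lt h1 h2)) (lt_irrefl _)

theorem norm_nat_lower {p : ℕ} (hp : p.Prime) (hpK : ‖(p : K)‖ = (p : ℝ)⁻¹) (j : ℕ) :
    1 ≤ j → (j : ℝ)⁻¹ ≤ ‖(j : K)‖ := by
  induction j using Nat.strong_induction_on with
  | _ j ih =>
    intro hj
    by_cases hd : p ∣ j
    · obtain ⟨i, rfl⟩ := hd
      have hi : 1 ≤ i := by
        rcases Nat.eq_zero_or_pos i with rfl | h
        · simp at hj
        · exact h
      have := ih i (by nlinarith [hp.two_le]) hi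
      push_cast
      rw [norm_mul, hpK, mul_inv]
      gcongr
    · rw [norm_coprime hp hpK j hd]
      exact inv_le_one_of_one_le₀ (by exact_mod_cast hj)

theorem norm_int_lower {p : ℕ} (hp : p.Prime) (hpK : ‖(p : K)‖ = (p : ℝ)⁻¹) (a : ℤ) (ha : a ≠ 0) :
    (|(a : ℝ)|)⁻¹ ≤ ‖(a : K)‖ := by
  have h := norm_nat_lower hp hpK a.natAbs (Int.natAbs_pos.2 ha)
  have h1 : ((a.natAbs : ℕ) : ℝ) = |(a : ℝ)| := by
    rw [Nat.cast_natAbs]; simp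
  rw [h1] at h
  rcases Int.natAbs_eq a with h2 | h2
  · rw [h2]; rw [← h2]; simpa using h
  · have h3 : (a : K) = -((a.natAbs : ℕ) : K) := by
      have := congrArg (Int.cast : ℤ → K) h2
      simpa using this
    rw [h3, norm_neg]; exact h

theorem norm_geom_sub (w : K) (hw : ‖w‖ ≤ 1) (j : ℕ) :
    ‖(∑ i ∈ Finset.range j, w ^ i) - (j : K)‖ ≤ ‖w - 1‖ := by
  have h : (∑ i ∈ Finset.range j, w ^ i) - (j : K) = ∑ i ∈ Finset.range j, (w ^ i - 1) := by
    simp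
  rw [h]
  apply IsUltrametricDist.norm_sum_le_of_forall_le_of_nonneg (norm_nonneg _)
  intro i _
  rw [← geom_sum_mul, norm_mul]
  have : ‖∑ k ∈ Finset.range i, w ^ k‖ ≤ 1 := by
    apply IsUltrametricDist.norm_sum_le_of_forall_le_of_nonneg zero_le_one
    intro k _
    rw [norm_pow]
    exact pow_le_one₀ (norm_nonneg _) hw
  nlinarith [norm_nonneg (w - 1)]

theorem norm_geom_le (w : K) (hw : ‖w‖ ≤ 1) (j : ℕ) : ‖w ^ j - 1‖ ≤ ‖w - 1‖ := by
  rw [← geom_sum_mul, norm_mul]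
  have : ‖∑ k ∈ Finset.range j, w ^ k‖ ≤ 1 := by
    apply IsUltrametricDist.norm_sum_le_of_forall_le_of_nonneg zero_le_one
    intro k _
    rw [norm_pow]
    exact pow_le_one₀ (norm_nonneg _) hw
  nlinarith [norm_nonneg (w - 1)]

theorem norm_sub_le_max_aux (a b : K) : ‖a - b‖ ≤ max ‖a‖ ‖b‖ := by
  have := IsUltrametricDist.norm_add_le_max a (-b)
  rwa [norm_neg, ← sub_eq_add_neg] at this

theorem norm_eq_of_sub_lt (a b : K) (h : ‖a - b‖ < ‖b‖) : ‖a‖ = ‖b‖ := by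
  have := IsUltrametricDist.norm_add_eq_max_of_norm_ne_norm h.ne
  rw [sub_add_cancel, max_eq_right h.le] at this
  exact this

theorem norm_pow_sub_one_lower {p : ℕ} (hp : p.Prime) (hpK : ‖(p : K)‖ = (p : ℝ)⁻¹) (j : ℕ) :
    ∀ w : K, ‖w‖ = 1 → ‖w - 1‖ < (p : ℝ)⁻¹ → 1 ≤ j → ‖w - 1‖ * (j : ℝ)⁻¹ ≤ ‖w ^ j - 1‖ := by
  have hp1 : (p : ℝ)⁻¹ < 1 := inv_lt_one_of_one_lt₀ (by exact_mod_cast hp.one_lt)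
  induction j using Nat.strong_induction_on with
  | _ j ih =>
    intro w hw hw1 hj
    by_cases hd : p ∣ j
    · obtain ⟨i, rfl⟩ := hd
      have hi : 1 ≤ i := by
        rcases Nat.eq_zero_or_pos i with rfl | h
        · simp at hj
        · exact h
      have hnp : ‖w ^ p - 1‖ = ‖w - 1‖ * (p : ℝ)⁻¹ := by
        rw [← geom_sum_mul, norm_mul, norm_eq_of_sub_lt _ (p : K), hpK, mul_comm]
        rw [hpK]
        exact lt_of_le_of_lt (norm_geom_sub w hw.le p) hw1
      have := ih i (by nlinarith [hp.two_le]) (w ^ p) (by simp [hw])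
        (lt_of_le_of_lt (norm_geom_le w hw.le p) hw1) hi
      rw [hnp, ← pow_mul] at this
      push_cast
      rw [mul_inv, ← mul_assoc]
      exact this
    · have hn := norm_coprime hp hpK j hd
      have : ‖w ^ j - 1‖ = ‖w - 1‖ := by
        rw [← geom_sum_mul, norm_mul, norm_eq_of_sub_lt _ (j : K), hn, one_mul]
        rw [hn]
        exact lt_of_le_of_lt (norm_geom_sub w hw.le j) (hw1.trans hp1)
      rw [this]
      have h2 : (j : ℝ)⁻¹ ≤ 1 := inv_le_one_of_one_le₀ (by exact_mod_cast hj)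
      nlinarith [norm_nonneg (w - 1)]

theorem dioph {p : ℕ} (hp : p.Prime) (hpK : ‖(p : K)‖ = (p : ℝ)⁻¹) (z : K) (hz : ‖z‖ = 1) :
    ∃ c : ℝ, 0 < c ∧ ∀ m : ℕ, 1 ≤ m → z ^ m ≠ 1 → c * (m : ℝ)⁻¹ ≤ ‖z ^ m - 1‖ := by
  have hinv : ∀ m : ℕ, 1 ≤ m → (m : ℝ)⁻¹ ≤ 1 := fun m hm =>
    inv_le_one_of_one_le₀ (by exact_mod_cast hm)
  by_cases hk : ∃ k : ℕ, 1 ≤ k ∧ ‖z ^ k - 1‖ < (p : ℝ)⁻¹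
  · obtain ⟨k, hk1, hk⟩ := hk
    by_cases h1 : z ^ k = 1
    · have hk0 : 0 < ‖(k : K)‖ :=
        lt_of_lt_of_le (by positivity) (norm_nat_lower hp hpK k hk1)
      refine ⟨‖(k : K)‖, hk0, ?_⟩
      intro m hm hm1
      have h2 : ∑ i ∈ Finset.range k, (z ^ m) ^ i = 0 := by
        have := geom_sum_mul (z ^ m) k
        rw [← pow_mul, mul_comm m k, pow_mul, h1, one_pow, sub_self] at this
        exact (mul_eq_zero.1 this).resolve_right (sub_ne_zero.2 hm1)
      have h3 := norm_geom_sub (z ^ m) (by simp [hz]) k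
      rw [h2, zero_sub, norm_neg] at h3
      nlinarith [hinv m hm]
    · refine ⟨‖z ^ k - 1‖, norm_pos_iff.2 (sub_ne_zero.2 h1), ?_⟩
      intro m hm _
      refine (norm_pow_sub_one_lower hp hpK m (z ^ k) (by simp [hz]) hk hm).trans ?_
      rw [← pow_mul, mul_comm k m, pow_mul]
      exact norm_geom_le _ (by simp [hz]) _
  · push Not at hk
    have hp0 : (0 : ℝ) < (p : ℝ)⁻¹ := by
      have := hp.pos
      positivity
    refine ⟨(p : ℝ)⁻¹, hp0, ?_⟩
    intro m hm _
    nlinarith [hk m hm, hinv m hm]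

theorem exists_z [IsAlgClosed K] (q : K) :
    ∃ z : K, z ≠ 0 ∧ 1 ≤ ‖z‖ ∧ 2 * q = z + z⁻¹ := by
  have hdeg : (X ^ 2 - C (2 * q) * X + 1 : K[X]).degree ≠ 0 := by
    have : (X ^ 2 - C (2 * q) * X + 1 : K[X]).degree = 2 := by compute_degree!
    rw [this]; decide
  obtain ⟨z, hz⟩ := IsAlgClosed.exists_root _ hdeg
  simp only [IsRoot, eval_add, eval_sub, eval_mul, eval_pow, eval_X, eval_C, eval_one] at hz
  have hz0 : z ≠ 0 := by rintro rfl; simp at hz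
  have h : 2 * q = z + z⁻¹ := by
    field_simp
    linear_combination -hz
  rcases le_total 1 ‖z‖ with h1 | h1
  · exact ⟨z, hz0, h1, h⟩
  · refine ⟨z⁻¹, inv_ne_zero hz0, ?_, by rw [h, inv_inv, add_comm]⟩
    rw [norm_inv]
    exact (one_le_inv₀ (norm_pos_iff.2 hz0)).2 h1

/-- asymptotics of the value -/
theorem main_asymp [IsAlgClosed K] [CharZero K] (p : ℕ) (hp : p.Prime)
    (hpK : ‖(p : K)‖ = (p : ℝ)⁻¹) (q : K) :
    ∃ A : ℕ → K, (∀ N, 2 ≤ N → A N ≠ 0 ∧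
      (A N = (Polynomial.Chebyshev.T K (N : ℤ) - X).eval q ∨
        ((Polynomial.Chebyshev.T K (N : ℤ) - X).eval q = 0 ∧
          A N = (derivative (Polynomial.Chebyshev.T K (N : ℤ) - X)).eval q))) ∧
      Tendsto (fun N : ℕ => (1 / (N : ℝ)) * Real.log ‖A N‖) atTop
        (nhds (max 0 (Real.log ‖2 * q‖))) := by
  classical
  obtain ⟨z, hz0, hz1, hq⟩ := exists_z q
  have h20 : (2 : K) ≠ 0 := two_ne_zero
  have hn2 : 0 < ‖(2 : K)‖ := norm_pos_iff.2 h20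
  have hinvN : Tendsto (fun N : ℕ => (1 / (N : ℝ))) atTop (nhds 0) :=
    tendsto_one_div_atTop_nhds_zero_nat
  rcases eq_or_lt_of_le hz1 with hz1 | hz1
  · -- the unit circle
    have hz1 := hz1.symm
    obtain ⟨c, hc, hcm⟩ := dioph hp hpK z hz1
    let A : ℕ → K := fun N => if (Polynomial.Chebyshev.T K (N : ℤ) - X).eval q = 0 then
      (derivative (Polynomial.Chebyshev.T K (N : ℤ) - X)).eval q else
      (Polynomial.Chebyshev.T K (N : ℤ) - X).eval q
    have hn2' : ‖(2 : K)‖ ≤ 1 := by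
      simpa using IsUltrametricDist.norm_natCast_le_one K 2
    have hmain : ∀ N, 2 ≤ N → A N ≠ 0 ∧ ‖A N‖ ≤ ‖(2 : K)‖⁻¹ ∧
        min 1 (c * c) * (((N : ℝ) + 1) ^ 2)⁻¹ ≤ ‖A N‖ := by
      intro N hN
      obtain ⟨n, rfl⟩ : ∃ n, N = n + 1 := ⟨N - 1, by omega⟩
      have hn : 1 ≤ n := by omega
      by_cases h0 : (Polynomial.Chebyshev.T K ((n + 1 : ℕ) : ℤ) - X).eval q = 0
      · have hA : A (n + 1) = _ := if_pos h0
        rw [hA]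
        obtain ⟨a, ha0, ha, hae⟩ := deriv_int q n hn (by simpa [sub_eq_zero] using h0)
        rw [hae]
        refine ⟨by exact_mod_cast ha0, ?_, ?_⟩
        · exact (IsUltrametricDist.norm_intCast_le_one K a).trans ((one_le_inv₀ hn2).2 hn2')
        · refine le_trans ?_ (norm_int_lower hp hpK a ha0)
          have ha' : |(a : ℝ)| ≤ ((n : ℝ) + 2) ^ 2 := by exact_mod_cast ha
          have hapos : 0 < |(a : ℝ)| := abs_pos.2 (by exact_mod_cast ha0)
          calc min 1 (c * c) * ((((n + 1 : ℕ) : ℝ) + 1) ^ 2)⁻¹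
              ≤ 1 * ((((n + 1 : ℕ) : ℝ) + 1) ^ 2)⁻¹ := by
                gcongr
                exact min_le_left _ _
            _ = (((n : ℝ) + 2) ^ 2)⁻¹ := by rw [one_mul]; push_cast; congr 2; ring
            _ ≤ _ := by gcongr
      · have hA : A (n + 1) = _ := if_neg h0
        rw [hA]
        refine ⟨h0, ?_⟩
        have hF := two_F_eval q z hz0 hq n
        have hne : 2 * ((Polynomial.Chebyshev.T K ((n + 1 : ℕ) : ℤ)).eval q - q) ≠ 0 := by
          refine mul_ne_zero h20 ?_
          simpa using h0
        rw [hF] at hne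
        have hne1 : z ^ (n + 2) ≠ 1 := by
          intro h; rw [h] at hne; simp at hne
        have hne2 : z ^ n ≠ 1 := by
          intro h; rw [h] at hne; simp at hne
        have l1 := hcm (n + 2) (by omega) hne1
        have l2 := hcm n hn hne2
        have u : ∀ m : ℕ, ‖z ^ m - 1‖ ≤ 1 := by
          intro m
          have := norm_sub_le_max_aux (z ^ m) 1
          simpa [hz1] using this
        have hFn := congrArg norm hF
        simp only [norm_mul, norm_pow, norm_inv, hz1, inv_one, one_pow, one_mul] at hFn
        have hev : (Polynomial.Chebyshev.T K ((n + 1 : ℕ) : ℤ) - X).eval q =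
          (Polynomial.Chebyshev.T K ((n + 1 : ℕ) : ℤ)).eval q - q := by simp
        rw [hev]
        set B := ‖(Polynomial.Chebyshev.T K ((n + 1 : ℕ) : ℤ)).eval q - q‖ with hB
        have hB0 : 0 ≤ B := norm_nonneg _
        constructor
        · rw [← one_div, le_div_iff₀ hn2, mul_comm, hFn]
          exact mul_le_one₀ (u _) (norm_nonneg _) (u _)
        · have hB2 : ‖(2 : K)‖ * B ≤ B := by nlinarith
          refine le_trans ?_ hB2
          rw [hFn]
          have hn0 : (0 : ℝ) < n := by exact_mod_cast hn
          calc min 1 (c * c) * ((((n + 1 : ℕ) : ℝ) + 1) ^ 2)⁻¹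
              ≤ (c * c) * ((((n + 1 : ℕ) : ℝ) + 1) ^ 2)⁻¹ := by
                gcongr
                exact min_le_right _ _
            _ = (c * ((n + 2 : ℕ) : ℝ)⁻¹) * (c * ((n : ℝ) + 2)⁻¹) := by
                push_cast
                rw [show (n : ℝ) + 1 + 1 = n + 2 by ring, pow_two, mul_inv]; ring
            _ ≤ (c * ((n + 2 : ℕ) : ℝ)⁻¹) * (c * (n : ℝ)⁻¹) := by
                gcongr
                linarith
            _ ≤ _ := by gcongr
    refine ⟨A, ?_, ?_⟩
    · intro N hN
      refine ⟨(hmain N hN).1, ?_⟩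
      by_cases h0 : (Polynomial.Chebyshev.T K (N : ℤ) - X).eval q = 0
      · exact Or.inr ⟨h0, if_pos h0⟩
      · exact Or.inl (if_neg h0)
    · have hmax : max 0 (Real.log ‖2 * q‖) = 0 := by
        apply max_eq_left
        apply Real.log_nonpos (norm_nonneg _)
        rw [hq]
        have := IsUltrametricDist.norm_add_le_max z z⁻¹
        simpa [hz1] using this
      rw [hmax]
      set e := min 1 (c * c) with he
      have he0 : 0 < e := lt_min one_pos (mul_pos hc hc)
      have hup : Tendsto (fun N : ℕ => (1 / (N : ℝ)) * Real.log (‖(2 : K)‖⁻¹)) atTop (nhds 0) := by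
        simpa using hinvN.mul_const (Real.log (‖(2 : K)‖⁻¹))
      have hlog : Tendsto (fun N : ℕ => Real.log N / N) atTop (nhds 0) := by
        have h := (Real.isLittleO_log_id_atTop.tendsto_div_nhds_zero).comp
          (tendsto_natCast_atTop_atTop (R := ℝ))
        exact h
      have hlo : Tendsto (fun N : ℕ => (1 / (N : ℝ)) * (Real.log e - 2 * Real.log 2)
          - 2 * (Real.log N / N)) atTop (nhds 0) := by
        simpa using (hinvN.mul_const (Real.log e - 2 * Real.log 2)).sub (hlog.const_mul 2)
      refine tendsto_of_tendsto_of_tendsto_of_le_of_le' hlo hup ?_ ?_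
      · filter_upwards [eventually_ge_atTop 2] with N hN
        obtain ⟨h0, -, hl⟩ := hmain N hN
        have hN0 : (0 : ℝ) < N := by positivity
        have hN1 : (1 : ℝ) ≤ N := by exact_mod_cast (by omega : 1 ≤ N)
        have : Real.log e - 2 * Real.log 2 - 2 * Real.log N ≤ Real.log ‖A N‖ := by
          have h1 : e * ((2 * (N : ℝ)) ^ 2)⁻¹ ≤ ‖A N‖ := by
            refine le_trans ?_ hl
            gcongr
            linarith
          have h2 := Real.log_le_log (by positivity) h1
          rw [Real.log_mul he0.ne' (by positivity), Real.log_inv, Real.log_pow,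
            Real.log_mul two_ne_zero hN0.ne'] at h2
          push_cast at h2
          linarith
        calc _ = (1 / (N : ℝ)) * (Real.log e - 2 * Real.log 2 - 2 * Real.log N) := by ring
          _ ≤ _ := by gcongr
      · filter_upwards [eventually_ge_atTop 2] with N hN
        obtain ⟨h0, hu, -⟩ := hmain N hN
        have := Real.log_le_log (norm_pos_iff.2 h0) hu
        gcongr
  · -- escaping case
    have hzi : ‖z⁻¹‖ < 1 := by
      rw [norm_inv]; exact inv_lt_one_of_one_lt₀ hz1
    have h2q : ‖2 * q‖ = ‖z‖ := by
      rw [hq]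
      apply norm_eq_of_sub_lt
      rw [add_sub_cancel_left]
      linarith
    have hval : ∀ N : ℕ, 2 ≤ N → ‖(2 : K)‖ * ‖(Polynomial.Chebyshev.T K (N : ℤ) - X).eval q‖
        = ‖z‖ ^ N := by
      intro N hN
      have h1 := (two_T_eval q z hz0 hq N).1
      have h2 : 2 * (Polynomial.Chebyshev.T K (N : ℤ) - X).eval q
          = z ^ N + (z⁻¹ ^ N - (z + z⁻¹)) := by
        rw [eval_sub, eval_X, mul_sub, h1, hq]; ring
      rw [← norm_mul, h2, ← norm_pow]
      apply norm_eq_of_sub_lt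
      rw [add_sub_cancel_left, ← hq]
      refine lt_of_le_of_lt (norm_sub_le_max_aux _ _) ?_
      rw [h2q, norm_pow, norm_pow]
      apply max_lt
      · exact lt_of_lt_of_le (pow_lt_one₀ (norm_nonneg _) hzi (by omega)) (one_le_pow₀ hz1.le)
      · exact lt_self_pow₀ hz1 (by omega)
    refine ⟨fun N => (Polynomial.Chebyshev.T K (N : ℤ) - X).eval q, ?_, ?_⟩
    · intro N hN
      refine ⟨?_, Or.inl rfl⟩
      intro h0
      have := hval N hN
      beta_reduce at h0
      rw [h0, norm_zero, mul_zero] at this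
      exact absurd this.symm (by positivity)
    · rw [h2q, max_eq_right (Real.log_nonneg hz1.le)]
      have hlim : Tendsto (fun N : ℕ => Real.log ‖z‖ - (1 / (N : ℝ)) * Real.log ‖(2 : K)‖) atTop
          (nhds (Real.log ‖z‖)) := by
        simpa using tendsto_const_nhds.sub (hinvN.mul_const (Real.log ‖(2 : K)‖))
      refine hlim.congr' ?_
      filter_upwards [eventually_ge_atTop 2] with N hN
      have hN0 : (N : ℝ) ≠ 0 := by positivity
      have h1 := hval N hN
      have hz0' : 0 < ‖z‖ := by linarith
      have hpos : ‖(Polynomial.Chebyshev.T K (N : ℤ) - X).eval q‖ ≠ 0 := by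
        intro h0
        rw [h0, mul_zero] at h1
        exact absurd h1.symm (by positivity)
      have h2 := congrArg Real.log h1
      rw [Real.log_mul hn2.ne' hpos, Real.log_pow] at h2
      field_simp
      linarith

theorem lead_F [CharZero K] (N : ℕ) (hN : 2 ≤ N) :
    (Polynomial.Chebyshev.T K (N : ℤ) - X).leadingCoeff = 2 ^ (N - 1) := by
  rw [leadingCoeff_sub_of_degree_lt, Polynomial.Chebyshev.leadingCoeff_T]
  · simp
  · rw [Polynomial.Chebyshev.degree_T, degree_X]
    simp only [Int.natAbs_natCast]
    exact_mod_cast hN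

end helpers

/-- for the degree-`d` Chebyshev polynomial `T_d` (`d ≥ 2`) viewed over an
algebraically closed complete nonarchimedean field `K` extending `ℚ_p`, and `q ∈ K`, the
averaged sum of `log‖ξ - q‖` over the roots `ξ ≠ q` of `T_d⁽ⁿ⁾ - X` (with multiplicity)
converges to `log⁺‖2q‖ - log‖2‖`. -/
theorem stmt15 {K : Type*} [NormedField K] [IsUltrametricDist K] [CompleteSpace K]
    [IsAlgClosed K] [CharZero K] [DecidableEq K]
    (p : ℕ) (hp : p.Prime) (hpK : ‖(p : K)‖ = (p : ℝ)⁻¹)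
    (d : ℕ) (hd : 2 ≤ d) (q : K) :
    Tendsto (fun n : ℕ =>
        (1 / (d : ℝ) ^ n) *
          (((polyIter (Polynomial.Chebyshev.T K d) n - X).roots.filter (fun ξ => ξ ≠ q)).map
            (fun ξ => Real.log ‖ξ - q‖)).sum)
      atTop (nhds (max 0 (Real.log ‖2 * q‖) - Real.log ‖(2 : K)‖)) := by
  obtain ⟨A, hA, hlim⟩ := main_asymp p hp hpK q
  have hpow : Tendsto (fun n : ℕ => d ^ n) atTop atTop :=
    tendsto_pow_atTop_atTop_of_one_lt (by omega)
  have hlim2 : Tendsto (fun N : ℕ => (1 / (N : ℝ)) * Real.log ‖A N‖ -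
      (1 - 1 / (N : ℝ)) * Real.log ‖(2 : K)‖) atTop
      (nhds (max 0 (Real.log ‖2 * q‖) - Real.log ‖(2 : K)‖)) := by
    have h := hlim.sub (((tendsto_const_nhds (x := (1 : ℝ))).sub
      (tendsto_one_div_atTop_nhds_zero_nat (𝕜 := ℝ))).mul_const (Real.log ‖(2 : K)‖))
    simpa using h
  refine (hlim2.comp hpow).congr' ?_
  filter_upwards [eventually_ge_atTop 1] with n hn
  have hN : 2 ≤ d ^ n := hd.trans (Nat.le_self_pow (by omega) d)
  obtain ⟨h0, h1⟩ := hA _ hN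
  rw [polyIter_T, sum_log_filter _ q (A (d ^ n)) h0 h1, lead_F _ hN, norm_pow, Real.log_pow,
    Nat.cast_sub (by omega)]
  have hd0 : (d : ℝ) ≠ 0 := by positivity
  simp only [Function.comp]
  push_cast
  field_simp
end
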